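/- Suppose g(r) = o(r^{-c}) as r → ∞ for some c > d. Let θ be the volume of the unit ball in ℝ^d and β := inf{x > 0 : x·g(α/(xθ)) > 1}. For γ > 0 define r̂_n(γ) := (γ log n/(α n))^{1/d}. Then for every γ > β, the probability that the graph G_n(r̂_n(γ)) is connected tends to 1 as n → ∞. -/

import Mathlib

open MeasureTheory ProbabilityTheory Filter Set

noncomputable section

namespace RCM

/-- The toroidal metric on the unit cube. -/
def torusDist {d : ℕ} (x y : EuclideanSpace ℝ (Fin d)) : ℝ :=
  ⨅ z : Fin d → ℤ, ‖x - y - (WithLp.equiv 2 (Fin d → ℝ)).symm (fun i => (z i : ℝ))‖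

/-- The half-open unit cube `S = (-1/2, 1/2]^d`. -/
def cube (d : ℕ) : Set (EuclideanSpace ℝ (Fin d)) :=
  {x | ∀ i, x i ∈ Set.Ioc (-(1/2) : ℝ) (1/2)}

/-- The random connection model: i.i.d. uniform points `X`, coupled Poisson counts `N`,
i.i.d. uniform edge variables `U`, with the three families mutually independent, and a
non-increasing connection function `g : [0,∞) → [0,1]` with finite positive integral `α`. -/
structure Model (d : ℕ) {Ω : Type*} [MeasurableSpace Ω] (P : Measure Ω) where
  g : ℝ → ℝ
  α : ℝ
  X : ℕ → Ω → EuclideanSpace ℝ (Fin d)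
  N : ℕ → Ω → ℕ
  U : ℕ → ℕ → Ω → ℝ
  g_antitone : AntitoneOn g (Set.Ici 0)
  g_mem : ∀ r : ℝ, 0 ≤ r → g r ∈ Set.Icc (0 : ℝ) 1
  g_integrable : MeasureTheory.Integrable (fun x : EuclideanSpace ℝ (Fin d) => g ‖x‖)
  α_def : α = ∫ x : EuclideanSpace ℝ (Fin d), g ‖x‖
  α_pos : 0 < α
  X_meas : ∀ i, Measurable (X i)
  X_unif : ∀ i : ℕ, 1 ≤ i → Measure.map (X i) P = volume.restrict (cube d)
  X_indep : iIndepFun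
    (fun i : {i : ℕ // 1 ≤ i} => X i) P
  N_meas : ∀ n, Measurable (N n)
  N_mono : ∀ ω, Monotone fun n => N n ω
  N_poisson : ∀ n k : ℕ,
    P {ω | N n ω = k} = ENNReal.ofReal (Real.exp (-(n : ℝ)) * (n : ℝ) ^ k / k.factorial)
  U_meas : ∀ i j, Measurable (U i j)
  U_unif : ∀ i j : ℕ, 1 ≤ i → i < j →
    Measure.map (U i j) P = volume.restrict (Set.Icc (0 : ℝ) 1)
  U_indep : iIndepFun
    (fun p : {p : ℕ × ℕ // 1 ≤ p.1 ∧ p.1 < p.2} => U p.1.1 p.1.2) P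
  families_indep : iIndep
    (![MeasurableSpace.comap (fun ω => fun i : ℕ => X i ω) inferInstance,
       MeasurableSpace.comap (fun ω => fun n : ℕ => N n ω) inferInstance,
       MeasurableSpace.comap (fun ω => fun p : ℕ × ℕ => U p.1 p.2 ω) inferInstance]) P

variable {d : ℕ} {Ω : Type*} [MeasurableSpace Ω] {P : Measure Ω}

/-- Adjacency in the graph `G_n(r)`: vertices `1 ≤ i,j ≤ N_n` are joined iff
`U_{ij} ≤ g(dist(X_i,X_j)/r)`. -/
def adj (M : Model d P) (n : ℕ) (r : ℝ) (ω : Ω) (i j : ℕ) : Prop :=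
  i ≠ j ∧ 1 ≤ i ∧ 1 ≤ j ∧ i ≤ M.N n ω ∧ j ≤ M.N n ω ∧
    M.U (min i j) (max i j) ω ≤ M.g (torusDist (M.X i ω) (M.X j ω) / r)

/-- The degree of vertex `i` in `G_n(r)`. -/
def deg (M : Model d P) (n : ℕ) (r : ℝ) (ω : Ω) (i : ℕ) : ℕ :=
  {j : ℕ | adj M n r ω i j}.ncard

/-- `W_n(r)`, the number of isolated vertices of `G_n(r)`. -/
def isolatedCount (M : Model d P) (n : ℕ) (r : ℝ) (ω : Ω) : ℕ :=
  {i : ℕ | 1 ≤ i ∧ i ≤ M.N n ω ∧ deg M n r ω i = 0}.ncard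


/-- `r̂_n(γ)` defined by `r̂_n(γ)^d = γ log n / (α n)`. -/
def rhat (M : Model d P) (γ : ℝ) (n : ℕ) : ℝ :=
  (γ * Real.log n / (M.α * n)) ^ ((1 : ℝ) / d)

/-- `d_n`, the critical parameter for absence of isolated nodes. -/
def critRadius (M : Model d P) (n : ℕ) (ω : Ω) : ℝ :=
  sInf {r : ℝ | 0 < r ∧ isolatedCount M n r ω = 0}

/-- The maximum vertex degree `Δ_n` of `G_n(r)`. -/
def maxDeg (M : Model d P) (n : ℕ) (r : ℝ) (ω : Ω) : ℕ :=
  (Finset.Icc 1 (M.N n ω)).sup (deg M n r ω)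

/-- The minimum vertex degree `δ_n` of `G_n(r)`. -/
def minDeg (M : Model d P) (n : ℕ) (r : ℝ) (ω : Ω) : ℕ :=
  sInf {k : ℕ | ∃ i, 1 ≤ i ∧ i ≤ M.N n ω ∧ deg M n r ω i = k}

/-- The length (toroidal metric) of the longest edge of `G_n(r)` (`0` if there are no edges). -/
def longestEdge (M : Model d P) (n : ℕ) (r : ℝ) (ω : Ω) : ℝ :=
  sSup ({0} ∪ {t : ℝ | ∃ i j, adj M n r ω i j ∧ t = torusDist (M.X i ω) (M.X j ω)})

/-- Connectivity of `G_n(r)`: any two vertices are joined by a path. -/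
def connectedGraph (M : Model d P) (n : ℕ) (r : ℝ) (ω : Ω) : Prop :=
  ∀ i j : ℕ, 1 ≤ i → i ≤ M.N n ω → 1 ≤ j → j ≤ M.N n ω →
    Relation.ReflTransGen (adj M n r ω) i j

/-- `H(x) = 1 - x + x log x` (with `H(0) = 1`, since `log 0 = 0` in Lean). -/
def H (x : ℝ) : ℝ := 1 - x + x * Real.log x

/-- The inverse of the restriction of `H` to `[1, ∞)`. -/
def Hplusinv (y : ℝ) : ℝ := sInf {x : ℝ | 1 ≤ x ∧ y ≤ H x}

/-- The inverse of the restriction of `H` to `[0, 1]`. -/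
def Hminusinv (y : ℝ) : ℝ := sInf {x : ℝ | 0 ≤ x ∧ H x ≤ y}

/-- The standard normal distribution function. -/
def stdNormalCDF (x : ℝ) : ℝ :=
  ∫ t in Set.Iic x, Real.exp (-t ^ 2 / 2) / Real.sqrt (2 * Real.pi)

/-- Blocks of independent real random variables: the probability that in every block `x ∈ s`
some variable exceeds its threshold factorises over the blocks. -/
theorem measureReal_forall_not_forall_le {Ω α β : Type*} [MeasurableSpace Ω] {P : Measure Ω}
    [DecidableEq α] (s : Finset α) (τ : α → Finset β) (f : α → β → Ω → ℝ)
    (hf : ∀ x ∈ s, ∀ r ∈ τ x, Measurable (f x r))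
    (hind : iIndepFun (fun p : {p : α × β // p.1 ∈ s ∧ p.2 ∈ τ p.1} => f p.1.1 p.1.2) P)
    (b : α → β → ℝ) (hb : ∀ x ∈ s, ∀ r ∈ τ x, P.real {ω | f x r ω ≤ b x r} = b x r) :
    P.real {ω | ∀ x ∈ s, ¬ ∀ r ∈ τ x, f x r ω ≤ b x r} = ∏ x ∈ s, (1 - ∏ r ∈ τ x, b x r) := by
  classical
  have hP : IsProbabilityMeasure P := hind.isProbabilityMeasure
  let K := {p : α × β // p.1 ∈ s ∧ p.2 ∈ τ p.1}
  have hKfin : Finite K := by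
    refine Set.Finite.to_subtype (s := {p : α × β | p.1 ∈ s ∧ p.2 ∈ τ p.1})
      ((s ×ˢ s.biUnion τ).finite_toSet.subset ?_)
    rintro ⟨x, r⟩ ⟨hx, hr⟩
    simp only [Finset.coe_product, Set.mem_prod, Finset.mem_coe, Finset.mem_biUnion]
    exact ⟨hx, x, hx, hr⟩
  have : Fintype K := Fintype.ofFinite K
  let g : K → Ω → ℝ := fun p => f p.1.1 p.1.2
  have hg : ∀ p, Measurable (g p) := fun p => hf _ p.2.1 _ p.2.2
  have hblock : ∀ x ∈ s, P.real {ω | ∀ r ∈ τ x, f x r ω ≤ b x r} = ∏ r ∈ τ x, b x r := by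
    intro x hx
    let S : Finset K := (τ x).attach.image fun r => ⟨(x, r.1), hx, r.2⟩
    have h1 := hind.measure_inter_preimage_eq_mul S (sets := fun p => Iic (b p.1.1 p.1.2))
      (fun _ _ => measurableSet_Iic)
    have h2 : {ω | ∀ r ∈ τ x, f x r ω ≤ b x r} = ⋂ p ∈ S, g p ⁻¹' Iic (b p.1.1 p.1.2) := by
      ext ω
      simp only [S, g, Set.mem_ofPred_eq, Set.mem_iInter, Finset.mem_image, Finset.mem_attach,
        true_and, Set.mem_preimage, Set.mem_Iic]
      refine ⟨?_, fun h r hr => h ⟨(x, r), hx, hr⟩ ⟨⟨r, hr⟩, rfl⟩⟩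
      rintro h _ ⟨⟨r, hr⟩, rfl⟩
      exact h r hr
    rw [measureReal_def, h2, h1, ENNReal.toReal_prod, Finset.prod_image, ← Finset.prod_attach (τ x)]
    · exact Finset.prod_congr rfl fun r _ => hb x hx r.1 r.2
    · intro r _ r' _ h
      exact Subtype.ext (congrArg (fun p : K => p.1.2) h)
  have key : ∀ t ⊆ s, P.real {ω | ∀ x ∈ t, ¬ ∀ r ∈ τ x, f x r ω ≤ b x r} =
      ∏ x ∈ t, (1 - ∏ r ∈ τ x, b x r) := by
    intro t
    induction t using Finset.induction_on with
    | empty => intro _; simp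
    | insert a t hat ih =>
      intro hts
      have has : a ∈ s := hts (Finset.mem_insert_self _ _)
      have hts' : t ⊆ s := fun x hx => hts (Finset.mem_insert_of_mem hx)
      rw [Finset.prod_insert hat, ← ih hts']
      let S : Finset K := Finset.univ.filter fun p => p.1.1 = a
      let T : Finset K := Finset.univ.filter fun p => p.1.1 ∈ t
      have hST : Disjoint S T := by
        rw [Finset.disjoint_left]
        intro p hp hp'
        simp only [S, T, Finset.mem_filter] at hp hp'
        exact hat (hp.2 ▸ hp'.2)
      have hi := hind.indepFun_finset S T hST hg
      let A : Set (S → ℝ) := {v | ¬ ∀ p : S, v p ≤ b p.1.1.1 p.1.1.2}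
      let B : Set (T → ℝ) := {v | ∀ x ∈ t, ¬ ∀ p : T, p.1.1.1 = x → v p ≤ b p.1.1.1 p.1.1.2}
      have hA : MeasurableSet A := by
        have : A = (⋂ p : S, {v | v p ≤ b p.1.1.1 p.1.1.2})ᶜ := by ext v; simp [A]
        rw [this]
        exact (MeasurableSet.iInter fun p => measurableSet_le (measurable_pi_apply p)
          measurable_const).compl
      have hB : MeasurableSet B := by
        have : B = ⋂ x ∈ t, (⋂ p : T, ⋂ _ : p.1.1.1 = x, {v | v p ≤ b p.1.1.1 p.1.1.2})ᶜ := by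
          ext v; simp [B]
        rw [this]
        exact Finset.measurableSet_biInter _ fun x _ => (MeasurableSet.iInter fun p =>
          MeasurableSet.iInter fun _ => measurableSet_le (measurable_pi_apply p)
          measurable_const).compl
      have h := hi.measure_inter_preimage_eq_mul A B hA hB
      have hSA : (fun ω (i : S) => g i ω) ⁻¹' A = {ω | ¬ ∀ r ∈ τ a, f a r ω ≤ b a r} := by
        ext ω
        simp only [A, g, Set.mem_preimage, Set.mem_ofPred_eq]
        refine not_congr ⟨fun h r hr => ?_, ?_⟩
        · exact h ⟨⟨(a, r), has, hr⟩, by simp [S]⟩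
        · rintro h ⟨⟨⟨x, r⟩, hx, hr⟩, hp⟩
          simp only [S, Finset.mem_filter] at hp
          obtain rfl : x = a := hp.2
          exact h r hr
      have hTB : (fun ω (i : T) => g i ω) ⁻¹' B =
          {ω | ∀ x ∈ t, ¬ ∀ r ∈ τ x, f x r ω ≤ b x r} := by
        ext ω
        simp only [B, g, Set.mem_preimage, Set.mem_ofPred_eq]
        refine forall₂_congr fun x hx => not_congr ⟨fun h r hr => ?_, ?_⟩
        · exact h ⟨⟨(x, r), hts' hx, hr⟩, by simp [T, hx]⟩ rfl
        · rintro h ⟨⟨⟨y, r⟩, hy, hr⟩, hp⟩ hyx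
          obtain rfl : y = x := hyx
          exact h r hr
      have hsplit : {ω | ∀ x ∈ insert a t, ¬ ∀ r ∈ τ x, f x r ω ≤ b x r} =
          {ω | ¬ ∀ r ∈ τ a, f a r ω ≤ b a r} ∩ {ω | ∀ x ∈ t, ¬ ∀ r ∈ τ x, f x r ω ≤ b x r} := by
        ext ω
        simp only [Finset.mem_insert, forall_eq_or_imp, Set.mem_ofPred_eq, Set.mem_inter_iff]
      have hm : MeasurableSet {ω | ∀ r ∈ τ a, f a r ω ≤ b a r} := by
        have : {ω | ∀ r ∈ τ a, f a r ω ≤ b a r} = ⋂ r ∈ τ a, {ω | f a r ω ≤ b a r} := by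
          ext; simp
        rw [this]
        exact Finset.measurableSet_biInter _ fun r hr =>
          measurableSet_le (hf a has r hr) measurable_const
      rw [hSA, hTB] at h
      rw [hsplit, measureReal_def, h, ENNReal.toReal_mul, ← hblock a has]
      congr 1
      exact probReal_compl_eq_one_sub hm
  exact key s subset_rfl

/-- The edge variable of the unordered pair `{i, j}`. -/
def edgeVar (M : Model d P) (i j : ℕ) (ω : Ω) : ℝ := M.U (min i j) (max i j) ω

theorem measureReal_edgeVar_le (M : Model d P) {i j : ℕ} (hi : 1 ≤ i) (hj : 1 ≤ j) (hij : i ≠ j)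
    {t : ℝ} (ht : t ∈ Icc (0 : ℝ) 1) : P.real {ω | edgeVar M i j ω ≤ t} = t := by
  have h := M.U_unif (min i j) (max i j) (le_min hi hj) (min_lt_max.2 hij)
  have h1 : {ω | edgeVar M i j ω ≤ t} = M.U (min i j) (max i j) ⁻¹' Iic t := rfl
  have h2 : Iic t ∩ Icc (0 : ℝ) 1 = Icc 0 t := by
    ext x
    simp only [Set.mem_inter_iff, Set.mem_Iic, Set.mem_Icc]
    exact ⟨fun h => ⟨h.2.1, h.1⟩, fun h => ⟨h.2, h.1, h.2.trans ht.2⟩⟩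
  rw [measureReal_def, h1, ← Measure.map_apply (M.U_meas _ _) measurableSet_Iic, h,
    Measure.restrict_apply measurableSet_Iic, h2, Real.volume_Icc, sub_zero,
    ENNReal.toReal_ofReal ht.1]

theorem measureReal_edges (M : Model d P) (s : Finset ℕ) (τ : ℕ → Finset ℕ) (b : ℕ → ℕ → ℝ)
    (hs : ∀ x ∈ s, 1 ≤ x) (hτ : ∀ x ∈ s, ∀ r ∈ τ x, 1 ≤ r ∧ r ∉ s)
    (hb : ∀ x ∈ s, ∀ r ∈ τ x, b x r ∈ Icc (0 : ℝ) 1) :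
    P.real {ω | ∀ x ∈ s, ¬ ∀ r ∈ τ x, edgeVar M x r ω ≤ b x r} =
      ∏ x ∈ s, (1 - ∏ r ∈ τ x, b x r) := by
  refine measureReal_forall_not_forall_le s τ (edgeVar M) (fun x _ r _ => M.U_meas _ _) ?_ b ?_
  · have hne : ∀ p : {p : ℕ × ℕ // p.1 ∈ s ∧ p.2 ∈ τ p.1}, p.1.1 ≠ p.1.2 := fun p h =>
      (hτ _ p.2.1 _ p.2.2).2 (h ▸ p.2.1)
    let e : {p : ℕ × ℕ // p.1 ∈ s ∧ p.2 ∈ τ p.1} → {p : ℕ × ℕ // 1 ≤ p.1 ∧ p.1 < p.2} :=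
      fun p => ⟨(min p.1.1 p.1.2, max p.1.1 p.1.2), le_min (hs _ p.2.1) (hτ _ p.2.1 _ p.2.2).1,
        min_lt_max.2 (hne p)⟩
    refine M.U_indep.precomp (g := e) ?_
    rintro ⟨⟨x, r⟩, hx, hr⟩ ⟨⟨y, t⟩, hy, ht⟩ h
    simp only [e, Subtype.mk.injEq, Prod.mk.injEq] at h hx hr hy ht ⊢
    have h1 := (hτ x hx r hr).2
    have h2 := (hτ y hy t ht).2
    have h3 : x ≠ t := fun h => h2 (h ▸ hx)
    have h4 : y ≠ r := fun h => h1 (h ▸ hy)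
    omega
  · intro x hx r hr
    exact measureReal_edgeVar_le M (hs x hx) (hτ x hx r hr).1
      (fun h => (hτ x hx r hr).2 (h ▸ hx)) (hb x hx r hr)

theorem measureReal_inter_families (M : Model d P) {A : Set (ℕ → EuclideanSpace ℝ (Fin d))}
    {B : Set (ℕ → ℕ)} {C : Set (ℕ × ℕ → ℝ)} (hA : MeasurableSet A) (hB : MeasurableSet B)
    (hC : MeasurableSet C) :
    P.real {ω | (fun n => M.N n ω) ∈ B ∧ (fun i => M.X i ω) ∈ A ∧
      (fun p : ℕ × ℕ => M.U p.1 p.2 ω) ∈ C} =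
    P.real {ω | (fun n => M.N n ω) ∈ B} * (P.real {ω | (fun i => M.X i ω) ∈ A} *
      P.real {ω | (fun p : ℕ × ℕ => M.U p.1 p.2 ω) ∈ C}) := by
  have h := M.families_indep.meas_iInter (s := ![{ω | (fun i => M.X i ω) ∈ A},
    {ω | (fun n => M.N n ω) ∈ B}, {ω | (fun p : ℕ × ℕ => M.U p.1 p.2 ω) ∈ C}]) (by
      intro i
      fin_cases i
      · exact ⟨A, hA, rfl⟩
      · exact ⟨B, hB, rfl⟩
      · exact ⟨C, hC, rfl⟩)
  rw [Fin.prod_univ_three] at h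
  have h2 : {ω | (fun n => M.N n ω) ∈ B ∧ (fun i => M.X i ω) ∈ A ∧
      (fun p : ℕ × ℕ => M.U p.1 p.2 ω) ∈ C} = ⋂ i, ![{ω | (fun i => M.X i ω) ∈ A},
    {ω | (fun n => M.N n ω) ∈ B}, {ω | (fun p : ℕ × ℕ => M.U p.1 p.2 ω) ∈ C}] i := by
    ext ω
    simp only [Set.mem_iInter, Fin.forall_fin_succ]
    simp
    tauto
  rw [measureReal_def, h2, h]
  simp only [Matrix.cons_val_zero, Matrix.cons_val_one, Matrix.cons_val, ENNReal.toReal_mul]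
  simp only [measureReal_def]
  ring

/-- The probability that prescribed vertices `R` have prescribed labels, and that no other
vertex `x` with label `y ∈ Y` has all its edge variables towards `τ y ⊆ R` below threshold. -/
theorem measureReal_no_hit_le (M : Model d P) {Γ : Type*} [Fintype Γ] [DecidableEq Γ]
    [MeasurableSpace Γ] [MeasurableSingletonClass Γ] [Nonempty Γ]
    (L : EuclideanSpace ℝ (Fin d) → Γ) (hL : Measurable L)
    (hLP : ∀ i, 1 ≤ i → ∀ a, P.real {ω | L (M.X i ω) = a} ≤ (Fintype.card Γ : ℝ)⁻¹)
    (n m : ℕ) (R : Finset ℕ) (hR : R ⊆ Finset.Icc 1 m) (ψ : ℕ → Γ) (Y : Finset Γ)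
    (τ : Γ → Finset ℕ) (hτ : ∀ y ∈ Y, τ y ⊆ R) (κ : Γ → ℕ → ℝ)
    (hκ : ∀ y r, κ y r ∈ Icc (0 : ℝ) 1) :
    P.real {ω | M.N n ω = m ∧ (∀ r ∈ R, L (M.X r ω) = ψ r) ∧ ∀ x ∈ Finset.Icc 1 m \ R,
      ¬ (L (M.X x ω) ∈ Y ∧ ∀ r ∈ τ (L (M.X x ω)), edgeVar M x r ω ≤ κ (L (M.X x ω)) r)} ≤
    P.real {ω | M.N n ω = m} * ((Fintype.card Γ : ℝ)⁻¹ ^ R.card *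
      (1 - (∑ y ∈ Y, ∏ r ∈ τ y, κ y r) / Fintype.card Γ) ^ (m - R.card)) := by
  classical
  have hP : IsProbabilityMeasure P := M.U_indep.isProbabilityMeasure
  set W : Finset ℕ := Finset.Icc 1 m \ R with hW
  set q : ℝ := (Fintype.card Γ : ℝ)⁻¹ with hq
  have hq0 : 0 ≤ q := by positivity
  have hcardW : W.card = m - R.card := by
    rw [hW, Finset.card_sdiff_of_subset hR, Nat.card_Icc, Nat.add_sub_cancel]
  have hW1 : ∀ x ∈ W, 1 ≤ x := fun x hx => (Finset.mem_Icc.1 (Finset.mem_sdiff.1 hx).1).1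
  -- the labelling of all vertices extending `φ` on `W` and `ψ` on `R`
  let ext : (W → Γ) → ℕ → Γ := fun φ x => if h : x ∈ W then φ ⟨x, h⟩ else ψ x
  let A : (W → Γ) → Set (ℕ → EuclideanSpace ℝ (Fin d)) := fun φ =>
    {v | ∀ i ∈ Finset.Icc 1 m, L (v i) = ext φ i}
  let s : (W → Γ) → Finset ℕ := fun φ => W.filter fun x => ext φ x ∈ Y
  let C : (W → Γ) → Set (ℕ × ℕ → ℝ) := fun φ =>
    {v | ∀ x ∈ s φ, ¬ ∀ r ∈ τ (ext φ x), v (min x r, max x r) ≤ κ (ext φ x) r}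
  let B : Set (ℕ → ℕ) := {v | v n = m}
  have hA : ∀ φ, MeasurableSet (A φ) := fun φ => by
    have : A φ = ⋂ i ∈ Finset.Icc 1 m, (fun v => L (v i)) ⁻¹' {ext φ i} := by ext v; simp [A]
    rw [this]
    exact Finset.measurableSet_biInter _ fun i _ =>
      (hL.comp (measurable_pi_apply i)) (measurableSet_singleton _)
  have hB : MeasurableSet B :=
    (measurable_pi_apply n : Measurable fun v : ℕ → ℕ => v n) (measurableSet_singleton m)
  have hC : ∀ φ, MeasurableSet (C φ) := fun φ => by
    have : C φ = ⋂ x ∈ s φ,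
        (⋂ r ∈ τ (ext φ x), {v | v (min x r, max x r) ≤ κ (ext φ x) r})ᶜ := by
      ext v; simp [C]
    rw [this]
    exact Finset.measurableSet_biInter _ fun x _ => (Finset.measurableSet_biInter _ fun r _ =>
      measurableSet_le (measurable_pi_apply _) measurable_const).compl
  have hPA : ∀ φ, P.real {ω | (fun i => M.X i ω) ∈ A φ} ≤ q ^ R.card * q ^ W.card := fun φ => by
    let S : Finset {i : ℕ // 1 ≤ i} := (Finset.Icc 1 m).subtype _
    have h1 := M.X_indep.measure_inter_preimage_eq_mul S (sets := fun i => L ⁻¹' {ext φ i})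
      (fun i _ => hL (measurableSet_singleton _))
    have h2 : {ω | (fun i => M.X i ω) ∈ A φ} = ⋂ i ∈ S, M.X i ⁻¹' (L ⁻¹' {ext φ i}) := by
      ext ω
      simp only [A, S, Set.mem_ofPred_eq, Set.mem_iInter, Finset.mem_subtype, Set.mem_preimage,
        Set.mem_singleton_iff, Subtype.forall]
      exact ⟨fun h i _ hi => h i hi, fun h i hi => h i (Finset.mem_Icc.1 hi).1 hi⟩
    have hcard : S.card = R.card + W.card := by
      have : S.card = m := by
        rw [Finset.card_subtype, Finset.filter_true_of_mem fun x hx => (Finset.mem_Icc.1 hx).1]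
        simp
      have := Finset.card_le_card hR
      simp only [Nat.card_Icc] at this
      omega
    rw [measureReal_def, h2, h1, ENNReal.toReal_prod, ← pow_add, ← hcard]
    refine (Finset.prod_le_prod (fun i _ => ENNReal.toReal_nonneg) ?_).trans_eq
      (Finset.prod_const q)
    exact fun i _ => hLP i i.2 _
  have hPC : ∀ φ, P.real {ω | (fun p : ℕ × ℕ => M.U p.1 p.2 ω) ∈ C φ} =
      ∏ x : W, (1 - if φ x ∈ Y then ∏ r ∈ τ (φ x), κ (φ x) r else 0) := fun φ => by
    have h := measureReal_edges M (s φ) (fun x => τ (ext φ x)) (fun x r => κ (ext φ x) r)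
      (fun x hx => hW1 x (Finset.mem_filter.1 hx).1) (fun x hx r hr => ?_)
      (fun x hx r hr => hκ _ _)
    · refine Eq.trans h ?_
      rw [Finset.prod_filter, ← Finset.prod_coe_sort]
      refine Finset.prod_congr rfl fun x _ => ?_
      have : ext φ x = φ x := by simp [ext]
      rw [this]
      split_ifs <;> simp
    · have hrR : r ∈ R := hτ _ (Finset.mem_filter.1 hx).2 hr
      refine ⟨(Finset.mem_Icc.1 (hR hrR)).1, fun hrs => ?_⟩
      exact (Finset.mem_sdiff.1 (Finset.mem_filter.1 hrs).1).2 hrR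
  have hcover : {ω | M.N n ω = m ∧ (∀ r ∈ R, L (M.X r ω) = ψ r) ∧ ∀ x ∈ W,
      ¬ (L (M.X x ω) ∈ Y ∧ ∀ r ∈ τ (L (M.X x ω)), edgeVar M x r ω ≤ κ (L (M.X x ω)) r)} ⊆
      ⋃ φ ∈ (Finset.univ : Finset (W → Γ)), {ω | (fun n => M.N n ω) ∈ B ∧
        (fun i => M.X i ω) ∈ A φ ∧ (fun p : ℕ × ℕ => M.U p.1 p.2 ω) ∈ C φ} := by
    rintro ω ⟨hN, hRψ, hno⟩
    simp only [Set.mem_iUnion]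
    refine ⟨fun x => L (M.X x ω), Finset.mem_univ _, hN, fun i hi => ?_, fun x hx hall => ?_⟩
    · by_cases h : i ∈ W
      · simp [ext, h]
      · have : i ∈ R := by
          by_contra hiR
          exact h (Finset.mem_sdiff.2 ⟨hi, hiR⟩)
        simp [ext, h, hRψ i this]
    · obtain ⟨hxW, hxY⟩ := Finset.mem_filter.1 hx
      simp only [ext, hxW, dif_pos] at hxY hall
      exact hno x hxW ⟨hxY, hall⟩
  have hnonneg : ∀ y, 0 ≤ 1 - (if y ∈ Y then ∏ r ∈ τ y, κ y r else 0) := fun y => by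
    split_ifs
    · exact sub_nonneg.2 (Finset.prod_le_one (fun r _ => (hκ y r).1) fun r _ => (hκ y r).2)
    · simp
  calc _ ≤ P.real (⋃ φ ∈ (Finset.univ : Finset (W → Γ)), {ω | (fun n => M.N n ω) ∈ B ∧
        (fun i => M.X i ω) ∈ A φ ∧ (fun p : ℕ × ℕ => M.U p.1 p.2 ω) ∈ C φ}) :=
        measureReal_mono hcover (measure_ne_top _ _)
    _ ≤ ∑ φ : W → Γ, P.real {ω | (fun n => M.N n ω) ∈ B ∧
        (fun i => M.X i ω) ∈ A φ ∧ (fun p : ℕ × ℕ => M.U p.1 p.2 ω) ∈ C φ} :=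
        measureReal_biUnion_finset_le _ _
    _ ≤ ∑ φ : W → Γ, P.real {ω | M.N n ω = m} * (q ^ R.card * q ^ W.card *
          ∏ x : W, (1 - if φ x ∈ Y then ∏ r ∈ τ (φ x), κ (φ x) r else 0)) := by
        refine Finset.sum_le_sum fun φ _ => ?_
        rw [measureReal_inter_families M (hA φ) hB (hC φ), hPC]
        refine mul_le_mul_of_nonneg_left (mul_le_mul_of_nonneg_right (hPA φ) ?_)
          measureReal_nonneg
        exact Finset.prod_nonneg fun x _ => hnonneg _
    _ = _ := by
        rw [← Finset.mul_sum, ← Finset.mul_sum, mul_assoc]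
        congr 2
        rw [← Fintype.piFinset_univ, ← Finset.prod_univ_sum (fun _ : W => (Finset.univ : Finset Γ))
          (fun _ y => 1 - if y ∈ Y then ∏ r ∈ τ y, κ y r else 0), Finset.prod_const,
          Finset.card_univ, Fintype.card_coe, ← mul_pow, hcardW]
        congr 1
        rw [Finset.sum_sub_distrib, Finset.sum_ite_mem, Finset.univ_inter, mul_sub, hq]
        have : (Fintype.card Γ : ℝ) ≠ 0 := by positivity
        simp [this]
        field_simp

section Window
variable {d q : ℕ}

/-- The window of radius `w` around `o` in the discrete torus. -/
def win (w : ℕ) (o : Fin d → ZMod q) : Finset (Fin d → ZMod q) :=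
  (Fintype.piFinset fun _ => Finset.Icc (-(w : ℤ)) w).image fun z i => o i + (z i : ZMod q)

theorem mem_win {w : ℕ} {o a : Fin d → ZMod q} :
    a ∈ win w o ↔ ∃ z : Fin d → ℤ, (∀ i, |z i| ≤ w) ∧ ∀ i, a i = o i + (z i : ZMod q) := by
  simp only [win, Finset.mem_image, Fintype.mem_piFinset, Finset.mem_Icc, abs_le]
  refine exists_congr fun z => and_congr_right fun _ => ⟨?_, fun h => funext fun i => (h i).symm⟩
  rintro rfl i
  rfl

theorem card_win_le (w : ℕ) (o : Fin d → ZMod q) : (win w o).card ≤ (2 * w + 1) ^ d := by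
  refine Finset.card_image_le.trans ?_
  rw [Fintype.card_piFinset_const, Int.card_Icc]
  exact Nat.pow_le_pow_left (by omega) _

theorem self_mem_win (w : ℕ) (o : Fin d → ZMod q) : o ∈ win w o :=
  mem_win.2 ⟨0, fun i => by simp, fun i => by simp⟩

theorem win_trans {u v : ℕ} {o a b : Fin d → ZMod q} (ha : a ∈ win u o) (hb : b ∈ win v a) :
    b ∈ win (u + v) o := by
  obtain ⟨z, hz, hz'⟩ := mem_win.1 ha
  obtain ⟨y, hy, hy'⟩ := mem_win.1 hb
  refine mem_win.2 ⟨z + y, fun i => ?_, fun i => ?_⟩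
  · push_cast
    exact (abs_add_le _ _).trans (add_le_add (hz i) (hy i))
  · rw [hy', hz', Pi.add_apply, Int.cast_add, add_assoc]

theorem win_mono {u v : ℕ} (h : u ≤ v) {o a : Fin d → ZMod q} (ha : a ∈ win u o) :
    a ∈ win v o := by
  obtain ⟨z, hz, hz'⟩ := mem_win.1 ha
  exact mem_win.2 ⟨z, fun i => (hz i).trans (by exact_mod_cast h), hz'⟩

theorem win_comm {u : ℕ} {o a : Fin d → ZMod q} (ha : a ∈ win u o) : o ∈ win u a := by
  obtain ⟨z, hz, hz'⟩ := mem_win.1 ha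
  exact mem_win.2 ⟨-z, fun i => by simpa using hz i, fun i => by simp [hz']⟩

theorem add_mem_win {u : ℕ} {o a b : Fin d → ZMod q} (ha : a ∈ win u o) :
    a + b ∈ win u (o + b) := by
  obtain ⟨z, hz, hz'⟩ := mem_win.1 ha
  exact mem_win.2 ⟨z, hz, fun i => by simp only [Pi.add_apply, hz']; ring⟩

theorem add_nsmul_single_mem_win (t : ℕ) (i : Fin d) (o : Fin d → ZMod q) :
    o + t • Pi.single i 1 ∈ win t o := by
  refine mem_win.2 ⟨Pi.single i (t : ℤ), fun k => ?_, fun k => ?_⟩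
  · by_cases h : k = i
    · subst h; simp
    · simp [h]
  · by_cases h : k = i
    · subst h; simp
    · simp [h]

theorem add_single_mem_win (i : Fin d) (o : Fin d → ZMod q) : o + Pi.single i 1 ∈ win 1 o := by
  have h := add_nsmul_single_mem_win 1 i o
  rwa [one_nsmul] at h

end Window

set_option maxHeartbeats 800000 in
/-- Deterministic renormalisation: if bad cells are locally sparse and every small connected set
of vertices can be extended to a new cell, then all vertices are mutually reachable. -/
theorem reach_of_sparse_bad {d q : ℕ} {ι : Type*} (i₁ i₂ : Fin d) (hi : i₁ ≠ i₂) {J D w : ℕ}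
    (hJ : 1 ≤ J) (hq : 2 * J < q) (hw : J * J * D + 6 * J + 6 ≤ w)
    (V : Set ι) (c : ι → Fin d → ZMod q) (reach : ι → ι → Prop)
    (hrefl : ∀ x, reach x x) (hsymm : ∀ x y, reach x y → reach y x)
    (htrans : ∀ x y z, reach x y → reach y z → reach x z)
    (good : (Fin d → ZMod q) → Prop)
    (hne : ∀ a, good a → ∃ x ∈ V, c x = a)
    (hgood : ∀ a, good a → ∀ x ∈ V, ∀ y ∈ V, c x ∈ win 1 a → c y ∈ win 1 a → reach x y)
    (hgrow : ∀ o, ∀ R : Finset ι, (R : Set ι) ⊆ V → R.Nonempty → R.card ≤ J * J →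
      Set.InjOn c R → (∀ r ∈ R, c r ∈ win w o) →
      ∃ x ∈ V, (∀ r ∈ R, c x ≠ c r) ∧ ∃ r ∈ R, reach r x ∧ c x ∈ win D (c r))
    (hbad : ∀ o, ∀ T : Finset (Fin d → ZMod q), T ⊆ win w o → (∀ a ∈ T, ¬ good a) → T.card < J) :
    ∀ x ∈ V, ∀ y ∈ V, reach x y := by
  classical
  have hq0 : NeZero q := ⟨by omega⟩
  set e₁ : Fin d → ZMod q := Pi.single i₁ 1 with he₁
  set e₂ : Fin d → ZMod q := Pi.single i₂ 1 with he₂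
  have hcast : ∀ s t : ℕ, s < 2 * J → t < 2 * J → (s : ZMod q) = t → s = t := by
    intro s t hs ht h
    rw [ZMod.natCast_eq_natCast_iff'] at h
    rwa [Nat.mod_eq_of_lt (by omega), Nat.mod_eq_of_lt (by omega)] at h
  have hcoord₁ : ∀ (a : Fin d → ZMod q) (s t : ℕ), (a + t • e₁ + s • e₂) i₁ = a i₁ + t := by
    intro a s t
    simp [he₁, he₂, hi]
  have hcoord₂ : ∀ (a : Fin d → ZMod q) (s t : ℕ), (a + t • e₁ + s • e₂) i₂ = a i₂ + s := by
    intro a s t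
    simp [he₁, he₂, hi.symm]
  have hwin : ∀ (a : Fin d → ZMod q) (s t : ℕ), s < 2 * J → t < J →
      a + t • e₁ + s • e₂ ∈ win (3 * J) a := fun a s t hs ht =>
    win_mono (by omega) (win_trans (add_nsmul_single_mem_win t i₁ a)
      (add_nsmul_single_mem_win s i₂ _))
  let conn : (Fin d → ZMod q) → (Fin d → ZMod q) → Prop := fun a b =>
    ∀ x ∈ V, ∀ y ∈ V, c x = a → c y = b → reach x y
  have conn_symm : ∀ a b, conn a b → conn b a := fun a b h x hx y hy hxa hyb =>
    hsymm _ _ (h y hy x hx hyb hxa)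
  have conn_trans : ∀ a b b', good b → conn a b → conn b b' → conn a b' := by
    intro a b b' hb h h' x hx y hy hxa hyb
    obtain ⟨z, hz, hzb⟩ := hne b hb
    exact htrans _ z _ (h x hx z hz hxa hzb) (h' z hz y hy hzb hyb)
  have conn_adj : ∀ a b, good a → b ∈ win 1 a → conn a b := by
    rintro a b ha hb x hx y hy rfl rfl
    exact hgood _ ha x hx y hy (self_mem_win _ _) hb
  have conn_line₀ : ∀ (a : Fin d → ZMod q) (i : Fin d) (n : ℕ),
      (∀ k ≤ n, good (a + k • Pi.single i 1)) → conn a (a + n • Pi.single i 1) := by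
    intro a i n
    induction n with
    | zero =>
      intro h
      have h0 := h 0 le_rfl
      simp only [zero_smul, add_zero] at h0 ⊢
      exact conn_adj _ _ h0 (self_mem_win _ _)
    | succ n ih =>
      intro h
      refine conn_trans _ _ _ (h n (by omega)) (ih fun k hk => h k (by omega))
        (conn_adj _ _ (h n (by omega)) ?_)
      rw [succ_nsmul, ← add_assoc]
      exact add_single_mem_win i _
  have conn_line : ∀ (a : Fin d → ZMod q) (i : Fin d) (n : ℕ),
      (∀ k < n, good (a + k • Pi.single i 1)) → ∀ j < n, ∀ k < n,
      conn (a + j • Pi.single i 1) (a + k • Pi.single i 1) := by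
    intro a i n h j hj k hk
    have h0 := h 0 (by omega)
    simp only [zero_smul, add_zero] at h0
    exact conn_trans _ a _ h0
      (conn_symm _ _ (conn_line₀ a i j fun l hl => h l (by omega)))
      (conn_line₀ a i k fun l hl => h l (by omega))
  let clean : (Fin d → ZMod q) → Prop := fun a => ∀ t < J, good (a + t • e₁)
  have clean_good : ∀ a, clean a → good a := fun a ha => by simpa using ha 0 (by omega)
  -- few translates along `e₂` fail to be clean
  have card_unclean : ∀ a : Fin d → ZMod q,
      ((Finset.range (2 * J)).filter fun j => ¬ clean (a + j • e₂)).card < J := by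
    intro a
    set I := (Finset.range (2 * J)).filter fun j => ¬ clean (a + j • e₂)
    have hI : ∀ j ∈ I, ∃ t < J, ¬ good (a + j • e₂ + t • e₁) := by
      intro j hj
      have := (Finset.mem_filter.1 hj).2
      simpa [clean] using this
    choose! t ht hb using hI
    have hinj : Set.InjOn (fun j => a + j • e₂ + t j • e₁) (I : Set ℕ) := by
      intro j hj k hk h
      have h' := congrFun h i₂
      simp only [add_right_comm a (_ • e₂)] at h'
      rw [hcoord₂, hcoord₂] at h'
      exact hcast _ _ (Finset.mem_range.1 (Finset.mem_filter.1 hj).1)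
        (Finset.mem_range.1 (Finset.mem_filter.1 hk).1) (add_left_cancel h')
    rw [← Finset.card_image_of_injOn hinj]
    refine hbad a _ ?_ ?_
    · intro b hb
      obtain ⟨j, hj, rfl⟩ := Finset.mem_image.1 hb
      rw [add_right_comm]
      exact win_mono (by nlinarith [Nat.zero_le (J * J * D)])
        (hwin a j (t j) (Finset.mem_range.1 (Finset.mem_filter.1 hj).1) (ht j hj))
    · intro b hb'
      obtain ⟨j, hj, rfl⟩ := Finset.mem_image.1 hb'
      exact hb j hj
  -- clean cells in the same column are connected
  have conn_column : ∀ a, ∀ j < 2 * J, ∀ k < 2 * J, clean (a + j • e₂) → clean (a + k • e₂) →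
      conn (a + j • e₂) (a + k • e₂) := by
    intro a j hj k hk hcj hck
    have hrung : ∃ t < J, ∀ s < 2 * J, good (a + t • e₁ + s • e₂) := by
      by_contra! hcon
      choose! s hs hb using hcon
      have hinj : Set.InjOn (fun t => a + t • e₁ + s t • e₂) (Finset.range J : Set ℕ) := by
        intro t ht t' ht' h
        have h' := congrFun h i₁
        simp only at h'
        rw [hcoord₁, hcoord₁] at h'
        have h1 := Finset.mem_range.1 ht
        have h2 := Finset.mem_range.1 ht'
        exact hcast _ _ (by omega) (by omega) (add_left_cancel h')
      have hlt : ((Finset.range J).image fun t => a + t • e₁ + s t • e₂).card < J := by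
        refine hbad a _ ?_ ?_
        · intro b hb
          obtain ⟨t, ht, rfl⟩ := Finset.mem_image.1 hb
          have ht := Finset.mem_range.1 ht
          exact win_mono (by nlinarith [Nat.zero_le (J * J * D)]) (hwin a _ t (hs t ht) ht)
        · intro b hb'
          obtain ⟨t, ht, rfl⟩ := Finset.mem_image.1 hb'
          exact hb t (Finset.mem_range.1 ht)
      rw [Finset.card_image_of_injOn hinj, Finset.card_range] at hlt
      exact hlt.false
    obtain ⟨t, ht, hgt⟩ := hrung
    have h1 := conn_line (a + j • e₂) i₁ J hcj 0 (by omega) t ht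
    have h2 := conn_line (a + t • e₁) i₂ (2 * J) hgt j hj k hk
    have h3 := conn_line (a + k • e₂) i₁ J hck t ht 0 (by omega)
    simp only [zero_smul, add_zero, ← he₁, ← he₂] at h1 h2 h3
    rw [add_right_comm] at h1 h3
    exact conn_trans _ _ _ (hgt j hj) h1 (conn_trans _ _ _ (hgt k hk) h2 h3)
  let Link : (Fin d → ZMod q) → Prop := fun u => ∀ a, ∀ j < 2 * J, ∀ k < 2 * J,
    clean (a + j • e₂) → clean (a + u + k • e₂) → conn (a + j • e₂) (a + u + k • e₂)
  have exists_clean : ∀ a, ∃ j < 2 * J, clean (a + j • e₂) := by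
    intro a
    have h := card_unclean a
    by_contra! hcon
    rw [Finset.filter_true_of_mem fun j hj => hcon j (Finset.mem_range.1 hj),
      Finset.card_range] at h
    omega
  have link_zero : Link 0 := by
    intro a j hj k hk h1 h2
    simp only [add_zero] at h2 ⊢
    exact conn_column a j hj k hk h1 h2
  have link_add : ∀ u v, Link u → Link v → Link (u + v) := by
    intro u v hu hv a j hj k hk h1 h2
    obtain ⟨l, hl, hcl⟩ := exists_clean (a + u)
    have h3 := hu a j hj l hl h1 hcl
    rw [← add_assoc] at h2 ⊢
    exact conn_trans _ _ _ (clean_good _ hcl) h3 (hv (a + u) l hl k hk hcl h2)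
  have link_single : ∀ i, Link (Pi.single i 1) := by
    intro i a j hj k hk h1 h2
    have hmem : a + Pi.single i 1 ∈ win 1 a := add_single_mem_win i a
    have hc1 := card_unclean a
    have hc2 := card_unclean (a + Pi.single i 1)
    obtain ⟨l, hl, hl1, hl2⟩ : ∃ l < 2 * J, clean (a + l • e₂) ∧
        clean (a + Pi.single i 1 + l • e₂) := by
      by_contra! hcon
      have hsub : Finset.range (2 * J) ⊆
          ((Finset.range (2 * J)).filter fun j => ¬ clean (a + j • e₂)) ∪
          ((Finset.range (2 * J)).filter fun j => ¬ clean (a + Pi.single i 1 + j • e₂)) := by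
        intro l hl
        simp only [Finset.mem_union, Finset.mem_filter, hl, true_and]
        by_cases h : clean (a + l • e₂)
        · exact Or.inr (hcon l (Finset.mem_range.1 hl) h)
        · exact Or.inl h
      have := (Finset.card_le_card hsub).trans (Finset.card_union_le _ _)
      rw [Finset.card_range] at this
      omega
    refine conn_trans _ _ _ (clean_good _ hl1) (conn_column a j hj l hl h1 hl1) ?_
    refine conn_trans _ _ _ (clean_good _ hl2) (conn_adj _ _ (clean_good _ hl1) (add_mem_win hmem))
      (conn_column _ l hl k hk hl2 h2)
  have link_all : ∀ u, Link u := by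
    intro u
    have h1 : ∀ (n : ℕ) i, Link (n • Pi.single i 1) := by
      intro n i
      induction n with
      | zero => simpa using link_zero
      | succ n ih => rw [succ_nsmul]; exact link_add _ _ ih (link_single i)
    have h2 : ∀ s : Finset (Fin d), Link (∑ i ∈ s, (u i).val • Pi.single i 1) := by
      intro s
      induction s using Finset.induction_on with
      | empty => simpa using link_zero
      | insert i s his ih => rw [Finset.sum_insert his]; exact link_add _ _ (h1 _ i) ih
    have h3 : u = ∑ i, (u i).val • (Pi.single i 1 : Fin d → ZMod q) := by
      rw [← Finset.univ_sum_single u]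
      refine Finset.sum_congr rfl fun i _ => ?_
      rw [← Pi.single_smul, nsmul_one, Finset.univ_sum_single, ZMod.natCast_zmod_val]
    rw [h3]
    exact h2 _
  have conn_clean : ∀ a b, clean a → clean b → conn a b := by
    intro a b ha hb
    have h := link_all (b - a) a 0 (by omega) 0 (by omega)
    simp only [zero_smul, add_zero, add_sub_cancel] at h
    exact h ha hb
  -- every vertex reaches a clean cell
  have reach_clean : ∀ v ∈ V, ∃ x ∈ V, reach v x ∧ clean (c x) := by
    intro v hv
    have hgrow' : ∀ k, k + 1 ≤ J * J → ∃ R : Finset ι, (R : Set ι) ⊆ V ∧ R.card = k + 1 ∧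
        Set.InjOn c R ∧ ∀ r ∈ R, reach v r ∧ c r ∈ win (k * D) (c v) := by
      intro k
      induction k with
      | zero =>
        intro _
        refine ⟨{v}, by simpa using hv, by simp, by simp, fun r hr => ?_⟩
        rw [Finset.mem_singleton.1 hr]
        exact ⟨hrefl _, self_mem_win _ _⟩
      | succ k ih =>
        intro hk
        obtain ⟨R, hRV, hRc, hRi, hR⟩ := ih (by omega)
        have hkD : k * D ≤ J * J * D := Nat.mul_le_mul_right _ (by omega)
        obtain ⟨x, hx, hxR, r, hr, hrx, hxD⟩ := hgrow (c v) R hRV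
          (Finset.card_pos.1 (by omega)) (by omega) hRi
          (fun r hr => win_mono (by omega) (hR r hr).2)
        have hxn : x ∉ R := fun h => hxR x h rfl
        refine ⟨insert x R, ?_, by rw [Finset.card_insert_of_notMem hxn, hRc], ?_, ?_⟩
        · rw [Finset.coe_insert]
          exact Set.insert_subset hx hRV
        · rw [Finset.coe_insert, Set.injOn_insert (by simpa using hxn)]
          refine ⟨hRi, ?_⟩
          rintro ⟨r', hr', h⟩
          exact hxR r' hr' h.symm
        · intro r' hr'
          rcases Finset.mem_insert.1 hr' with rfl | hr'
          · refine ⟨htrans _ _ _ (hR r hr).1 hrx, ?_⟩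
            rw [Nat.succ_mul]
            exact win_trans (hR r hr).2 hxD
          · exact ⟨(hR r' hr').1, win_mono (Nat.mul_le_mul_right _ (by omega)) (hR r' hr').2⟩
    obtain ⟨R, hRV, hRc, hRi, hR⟩ := hgrow' (J * J - 1) (by have := Nat.mul_le_mul hJ hJ; omega)
    by_contra! hcon
    have hun : ∀ r ∈ R, ∃ t < J, ¬ good (c r + t • e₁) := by
      intro r hr
      have := hcon r (hRV hr) (hR r hr).1
      simpa [clean] using this
    choose! t ht hb using hun
    have hcard : R.card ≤ J * (R.image fun r => c r + t r • e₁).card := by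
      refine Finset.card_le_mul_card_image R J fun b _ => ?_
      rw [← Finset.card_range J]
      refine Finset.card_le_card_of_injOn t ?_ ?_
      · intro r hr
        exact Finset.mem_coe.2 (Finset.mem_range.2 (ht r (Finset.mem_filter.1 hr).1))
      · intro r hr r' hr' h
        obtain ⟨h1, h2⟩ := Finset.mem_filter.1 hr
        obtain ⟨h3, h4⟩ := Finset.mem_filter.1 hr'
        refine hRi h1 h3 ?_
        rw [← h4, h] at h2
        exact add_right_cancel h2
    have hlt := hbad (c v) (R.image fun r => c r + t r • e₁) (by
      intro b hb'
      obtain ⟨r, hr, rfl⟩ := Finset.mem_image.1 hb'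
      refine win_mono ?_ (win_trans (hR r hr).2 (add_nsmul_single_mem_win (t r) i₁ _))
      have h1 : (J * J - 1) * D ≤ J * J * D := Nat.mul_le_mul_right _ (by omega)
      have h2 := ht r hr
      omega) (by
      intro b hb'
      obtain ⟨r, hr, rfl⟩ := Finset.mem_image.1 hb'
      exact hb r hr)
    have h5 := Nat.mul_lt_mul_of_pos_left hlt (show 0 < J by omega)
    have := Nat.mul_le_mul hJ hJ
    omega
  intro x hx y hy
  obtain ⟨x', hx', hxx', hcx⟩ := reach_clean x hx
  obtain ⟨y', hy', hyy', hcy⟩ := reach_clean y hy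
  exact htrans _ _ _ hxx' (htrans _ _ _ (conn_clean _ _ hcx hcy x' hx' y' hy' rfl rfl)
    (hsymm _ _ hyy'))

theorem sum_le_sum_of_card_lt_le {Γ : Type*} [Fintype Γ] {f g : Γ → ℝ}
    (hf : ∀ x, 0 ≤ f x) (hg : ∀ x, 0 ≤ g x)
    (h : ∀ t : ℝ, 0 < t → (Finset.univ.filter fun x => t < f x).card ≤
      (Finset.univ.filter fun x => t < g x).card) : ∑ x, f x ≤ ∑ x, g x := by
  let _ : MeasurableSpace Γ := ⊤
  have _ : MeasurableSingletonClass Γ := ⟨fun _ => trivial⟩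
  have key : ∀ u : Γ → ℝ, (∀ x, 0 ≤ u x) → ENNReal.ofReal (∑ x, u x) =
      ∫⁻ t in Ioi (0 : ℝ), ((Finset.univ.filter fun x => t < u x).card : ENNReal) := by
    intro u hu
    have h1 := lintegral_eq_lintegral_meas_lt (f := u) Measure.count
      (Eventually.of_forall hu) (measurable_from_top.aemeasurable)
    rw [lintegral_fintype] at h1
    simp only [Measure.count_singleton, mul_one] at h1
    rw [ENNReal.ofReal_sum_of_nonneg fun x _ => hu x, h1]
    refine lintegral_congr fun t => ?_
    rw [← Measure.count_apply_finset]
    congr 1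
    ext x
    simp
  rw [← ENNReal.ofReal_le_ofReal_iff (Finset.sum_nonneg fun x _ => hg x), key f hf, key g hg]
  refine setLIntegral_mono' measurableSet_Ioi fun t ht => ?_
  exact_mod_cast h t ht

open scoped Pointwise in
/-- A rearrangement consequence of the Cauchy–Davenport inequality: the translates of a kernel
peaked at `0` to the points of `A` have, outside of `A`, at least the mass of the kernel off `0`. -/
theorem exists_sum_kernel_ge {Γ : Type*} [AddCommGroup Γ] [Fintype Γ] [DecidableEq Γ]
    {κ : Γ → ℝ} (hκ : ∀ x, 0 ≤ κ x) (hmax : ∀ x, κ x ≤ κ 0) {b K : ℕ}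
    (hsupp : (Finset.univ.filter fun x => 0 < κ x).card ≤ b)
    (hord : ((K + b : ℕ) : ℕ∞) ≤ AddMonoid.minOrder Γ) {A : Finset Γ} (hA : A.Nonempty)
    (hAK : A.card ≤ K) :
    ∃ ρ : Γ → Γ, (∀ y, ρ y ∈ A) ∧
      ∑ x ∈ Finset.univ.erase 0, κ x ≤ ∑ y ∈ Finset.univ \ A, κ (y - ρ y) := by
  have hex : ∀ y, ∃ a ∈ A, ∀ a' ∈ A, κ (y - a') ≤ κ (y - a) := fun y =>
    A.exists_max_image (fun a => κ (y - a)) hA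
  choose ρ hρA hρ using hex
  refine ⟨ρ, hρA, ?_⟩
  have h1 : ∑ x ∈ Finset.univ.erase 0, κ x = ∑ x, if x = 0 then 0 else κ x := by
    rw [← Finset.sum_erase (a := (0 : Γ)) Finset.univ (by simp)]
    exact Finset.sum_congr rfl fun x hx => by simp [Finset.ne_of_mem_erase hx]
  have h2 : ∑ y ∈ Finset.univ \ A, κ (y - ρ y) = ∑ y, if y ∈ A then 0 else κ (y - ρ y) := by
    rw [← Finset.sum_sdiff (Finset.subset_univ A), Finset.sum_eq_zero (s := A), add_zero]
    · exact Finset.sum_congr rfl fun x hx => by simp [(Finset.mem_sdiff.1 hx).2]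
    · intro x hx
      simp [hx]
  rw [h1, h2]
  refine sum_le_sum_of_card_lt_le ?_ ?_ ?_
  · intro x
    split_ifs
    exacts [le_rfl, hκ x]
  · intro x
    split_ifs
    exacts [le_rfl, hκ _]
  intro t ht
  set B := Finset.univ.filter fun x => t < κ x with hB
  have hBerase : (Finset.univ.filter fun x => t < if x = 0 then 0 else κ x) = B.erase 0 := by
    ext x
    by_cases hx : x = 0 <;> simp [hx, hB, ht.le]
  have hAB : (Finset.univ.filter fun y => t < if y ∈ A then 0 else κ (y - ρ y)) = (A + B) \ A := by
    ext y
    by_cases hy : y ∈ A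
    · simp [hy, ht.le]
    · simp only [hy, if_false, Finset.mem_filter, Finset.mem_univ, true_and, Finset.mem_sdiff,
        not_false_eq_true, and_true, Finset.mem_add, hB]
      constructor
      · intro h
        exact ⟨ρ y, hρA y, y - ρ y, h, add_sub_cancel _ _⟩
      · rintro ⟨a, ha, x, hx, rfl⟩
        refine lt_of_lt_of_le ?_ (hρ _ a ha)
        simpa using hx
  rw [hBerase, hAB]
  by_cases hBne : B.Nonempty
  · have h0 : (0 : Γ) ∈ B := by
      obtain ⟨x, hx⟩ := hBne
      simp only [hB, Finset.mem_filter, Finset.mem_univ, true_and] at hx ⊢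
      exact hx.trans_le (hmax x)
    have hsub : A ⊆ A + B := fun a ha => Finset.mem_add.2 ⟨a, ha, 0, h0, add_zero a⟩
    rw [Finset.card_erase_of_mem h0, Finset.card_sdiff_of_subset hsub]
    have hcd := cauchy_davenport_minOrder_add hA hBne
    have hBb : B.card ≤ b := (Finset.card_le_card fun x hx => by
      simp only [hB, Finset.mem_filter, Finset.mem_univ, true_and] at hx ⊢
      exact ht.trans hx).trans hsupp
    have hle : A.card + B.card - 1 ≤ (A + B).card := by
      have h3 : ((A.card + B.card - 1 : ℕ) : ℕ∞) ≤ AddMonoid.minOrder Γ :=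
        le_trans (by exact_mod_cast (by omega)) hord
      rw [min_eq_right h3] at hcd
      exact_mod_cast hcd
    omega
  · rw [Finset.not_nonempty_iff_eq_empty.1 hBne]
    simp

theorem le_minOrder_pi_zmod {d q W : ℕ} (hW : ∀ p : ℕ, p.Prime → p ∣ q → W ≤ p) :
    (W : ℕ∞) ≤ AddMonoid.minOrder (Fin d → ZMod q) := by
  rw [AddMonoid.le_minOrder]
  intro a ha hfin
  obtain ⟨i, hi⟩ := Function.ne_iff.1 ha
  have h1 : addOrderOf (a i) ∣ addOrderOf a :=
    addOrderOf_map_dvd (Pi.evalAddMonoidHom (fun _ : Fin d => ZMod q) i) a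
  have h2 : addOrderOf (a i) ∣ q := addOrderOf_dvd_of_nsmul_eq_zero (by simp)
  have h3 : addOrderOf (a i) ≠ 1 := fun h => hi (AddMonoid.addOrderOf_eq_one_iff.1 h)
  have h4 := hW _ (Nat.minFac_prime h3) ((Nat.minFac_dvd _).trans h2)
  have h5 : (addOrderOf (a i)).minFac ≤ addOrderOf a :=
    Nat.le_of_dvd hfin.addOrderOf_pos ((Nat.minFac_dvd _).trans h1)
  exact_mod_cast h4.trans h5

theorem torusDist_nonneg {d : ℕ} (x y : EuclideanSpace ℝ (Fin d)) : 0 ≤ torusDist x y :=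
  Real.iInf_nonneg fun _ => norm_nonneg _

theorem torusDist_comm {d : ℕ} (x y : EuclideanSpace ℝ (Fin d)) :
    torusDist x y = torusDist y x := by
  unfold torusDist
  refine (Equiv.neg (Fin d → ℤ)).iInf_congr fun z => ?_
  rw [← norm_neg]
  congr 1
  ext i
  simp
  ring

theorem adj_symm {d : ℕ} {Ω : Type*} [MeasurableSpace Ω] {P : Measure Ω} {M : Model d P} {n : ℕ}
    {r : ℝ} {ω : Ω} {i j : ℕ} (h : adj M n r ω i j) : adj M n r ω j i := by
  obtain ⟨h1, h2, h3, h4, h5, h6⟩ := h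
  exact ⟨h1.symm, h3, h2, h5, h4, by rwa [min_comm, max_comm, torusDist_comm]⟩

/-- The Euclidean norm of an integer vector. -/
def intNorm {d : ℕ} (z : Fin d → ℤ) : ℝ :=
  ‖(WithLp.toLp 2 fun i => (z i : ℝ) : EuclideanSpace ℝ (Fin d))‖

theorem norm_le_sqrt_of_abs_le_one {d : ℕ} {x : EuclideanSpace ℝ (Fin d)} (h : ∀ i, |x i| ≤ 1) :
    ‖x‖ ≤ √d := by
  rw [EuclideanSpace.norm_eq]
  refine Real.sqrt_le_sqrt ?_
  calc ∑ i, ‖x i‖ ^ 2 ≤ ∑ _i : Fin d, (1 : ℝ) :=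
        Finset.sum_le_sum fun i _ => pow_le_one₀ (norm_nonneg _) (h i)
    _ = d := by simp

section Label
variable {d q : ℕ}

/-- The cell of the `q`-adic subdivision of the torus that contains a given point. -/
def label (q : ℕ) (x : EuclideanSpace ℝ (Fin d)) : Fin d → ZMod q :=
  fun i => ((⌈(q : ℝ) * (x i + 1 / 2)⌉ : ℤ) : ZMod q)

theorem measurable_label : Measurable (label q : EuclideanSpace ℝ (Fin d) → _) := by
  refine measurable_pi_lambda _ fun i => ?_
  refine (measurable_from_top (f := fun k : ℤ => (k : ZMod q))).comp (Int.measurable_ceil.comp ?_)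
  fun_prop

theorem torusDist_le_of_label [NeZero q] (x y : EuclideanSpace ℝ (Fin d)) :
    torusDist x y ≤ (intNorm (fun i => (label q x i - label q y i).valMinAbs) + √d) / q := by
  have hq : (0 : ℝ) < q := by exact_mod_cast NeZero.pos q
  set z : Fin d → ℤ := fun i => (label q x i - label q y i).valMinAbs with hz
  have hs : ∀ i, ∃ s : ℤ, ⌈(q : ℝ) * (x i + 1 / 2)⌉ - ⌈(q : ℝ) * (y i + 1 / 2)⌉ = z i + q * s := by
    intro i
    have h : ((z i : ℤ) : ZMod q) =
        ((⌈(q : ℝ) * (x i + 1 / 2)⌉ - ⌈(q : ℝ) * (y i + 1 / 2)⌉ : ℤ) : ZMod q) := by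
      rw [hz, ZMod.coe_valMinAbs]
      simp [label]
    rw [ZMod.intCast_eq_intCast_iff_dvd_sub] at h
    obtain ⟨s, hs⟩ := h
    exact ⟨s, by linarith⟩
  choose s hs using hs
  let v : EuclideanSpace ℝ (Fin d) := (q : ℝ) • (x - y -
    (WithLp.equiv 2 (Fin d → ℝ)).symm (fun i => (s i : ℝ))) - WithLp.toLp 2 fun i => (z i : ℝ)
  have hv : ‖v‖ ≤ √d := by
    refine norm_le_sqrt_of_abs_le_one fun i => ?_
    have h1 := Int.ceil_lt_add_one ((q : ℝ) * (x i + 1 / 2))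
    have h2 := Int.le_ceil ((q : ℝ) * (x i + 1 / 2))
    have h3 := Int.ceil_lt_add_one ((q : ℝ) * (y i + 1 / 2))
    have h4 := Int.le_ceil ((q : ℝ) * (y i + 1 / 2))
    have h5 : ((⌈(q : ℝ) * (x i + 1 / 2)⌉ : ℤ) : ℝ) - (⌈(q : ℝ) * (y i + 1 / 2)⌉ : ℤ) =
        z i + q * s i := by exact_mod_cast hs i
    have h6 : v i = q * (x i + 1 / 2) - q * (y i + 1 / 2) - q * s i - z i := by
      simp [v]
      ring
    rw [h6, abs_le]
    constructor <;> linarith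
  have h7 : torusDist x y ≤
      ‖x - y - (WithLp.equiv 2 (Fin d → ℝ)).symm (fun i => (s i : ℝ))‖ :=
    ciInf_le ⟨0, by rintro _ ⟨_, rfl⟩; exact norm_nonneg _⟩ s
  refine h7.trans ?_
  rw [le_div_iff₀ hq, mul_comm, ← abs_of_pos hq, ← Real.norm_eq_abs, ← norm_smul]
  calc _ = ‖WithLp.toLp 2 (fun i => (z i : ℝ)) + v‖ := by simp [v]
    _ ≤ _ := (norm_add_le _ _).trans (by rw [intNorm]; linarith)

theorem measureReal_label_eq_le {Ω : Type*} [MeasurableSpace Ω] {P : Measure Ω} [NeZero q]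
    (M : Model d P) {i : ℕ} (hi : 1 ≤ i) (a : Fin d → ZMod q) :
    P.real {ω | label q (M.X i ω) = a} ≤ (Fintype.card (Fin d → ZMod q) : ℝ)⁻¹ := by
  have hq : (0 : ℝ) < q := by exact_mod_cast NeZero.pos q
  have hmeas : MeasurableSet {x : EuclideanSpace ℝ (Fin d) | label q x = a} :=
    measurable_label (measurableSet_singleton a)
  have hk : ∀ j, ∃ k : ℤ, ∀ m : ℤ, 1 ≤ m → m ≤ q → (m : ZMod q) = a j → m = k := by
    intro j
    by_cases h : ∃ k : ℤ, 1 ≤ k ∧ k ≤ q ∧ (k : ZMod q) = a j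
    · obtain ⟨k, h1, h2, h3⟩ := h
      refine ⟨k, fun m h4 h5 h6 => ?_⟩
      rw [← h3, ZMod.intCast_eq_intCast_iff_dvd_sub] at h6
      obtain ⟨t, ht⟩ := h6
      have hqz : (0 : ℤ) < q := by exact_mod_cast NeZero.pos q
      have h7 : t < 1 := by nlinarith
      have h8 : -1 < t := by nlinarith
      obtain rfl : t = 0 := by omega
      omega
    · exact ⟨0, fun m h1 h2 h3 => (h ⟨m, h1, h2, h3⟩).elim⟩
  choose k hk using hk
  have hsub : {x : EuclideanSpace ℝ (Fin d) | label q x = a} ∩ cube d ⊆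
      (WithLp.ofLp) ⁻¹' (Set.pi univ fun j =>
        Ioc (((k j : ℝ) - 1) / q - 1 / 2) ((k j : ℝ) / q - 1 / 2)) := by
    rintro x ⟨hx, hxc⟩ j -
    have h1 := (hxc j).1
    have h2 := (hxc j).2
    have h3 : ⌈(q : ℝ) * (x j + 1 / 2)⌉ = k j := by
      refine hk j _ (Int.one_le_ceil_iff.2 (by nlinarith)) (Int.ceil_le.2 ?_) (congrFun hx j)
      push_cast
      nlinarith
    rw [Int.ceil_eq_iff] at h3
    constructor
    · rw [sub_lt_iff_lt_add, div_lt_iff₀ hq]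
      linarith [h3.1]
    · rw [le_sub_iff_add_le, le_div_iff₀ hq]
      linarith [h3.2]
  have hvol : volume ((WithLp.ofLp : EuclideanSpace ℝ (Fin d) → _) ⁻¹' (Set.pi univ fun j =>
        Ioc (((k j : ℝ) - 1) / q - 1 / 2) ((k j : ℝ) / q - 1 / 2))) =
      ENNReal.ofReal ((q : ℝ)⁻¹ ^ d) := by
    rw [(PiLp.volume_preserving_ofLp (Fin d)).measure_preimage
      (MeasurableSet.univ_pi fun _ => measurableSet_Ioc).nullMeasurableSet, volume_pi_pi]
    simp only [Real.volume_Ioc]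
    rw [Finset.prod_congr rfl fun j _ => show _ = ENNReal.ofReal ((q : ℝ)⁻¹) by congr 1; ring]
    rw [Finset.prod_const, Finset.card_univ, Fintype.card_fin, ENNReal.ofReal_pow (by positivity)]
  have h : P {ω | label q (M.X i ω) = a} ≤ ENNReal.ofReal ((q : ℝ)⁻¹ ^ d) := by
    have : {ω | label q (M.X i ω) = a} = M.X i ⁻¹' {x | label q x = a} := rfl
    rw [this, ← Measure.map_apply (M.X_meas i) hmeas, M.X_unif i hi, Measure.restrict_apply hmeas,
      ← hvol]
    exact measure_mono hsub
  rw [measureReal_def]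
  refine (ENNReal.toReal_le_of_le_ofReal (by positivity) h).trans_eq ?_
  simp [ZMod.card]

end Label

section Kernel
variable {d : ℕ} {g : ℝ → ℝ} {η : ℝ} {D : ℕ}

/-- The truncated, discretised connection function on `ℤ^d`. -/
def cellKer (g : ℝ → ℝ) (η : ℝ) (D : ℕ) (z : Fin d → ℤ) : ℝ :=
  if ∀ i, |z i| ≤ D then g (η * (intNorm z + √d)) else 0

/-- The discretised connection function on the discrete torus. -/
def torusKer (g : ℝ → ℝ) (η : ℝ) (D q : ℕ) (x : Fin d → ZMod q) : ℝ :=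
  cellKer g η D fun i => (x i).valMinAbs

theorem intNorm_nonneg (z : Fin d → ℤ) : 0 ≤ intNorm z := norm_nonneg _

theorem cellKer_mem (hg : ∀ r : ℝ, 0 ≤ r → g r ∈ Icc (0 : ℝ) 1) (hη : 0 ≤ η) (z : Fin d → ℤ) :
    cellKer g η D z ∈ Icc (0 : ℝ) 1 := by
  unfold cellKer
  split_ifs
  · exact hg _ (mul_nonneg hη (add_nonneg (intNorm_nonneg z) (Real.sqrt_nonneg _)))
  · simp

theorem torusKer_le_zero (hg : ∀ r : ℝ, 0 ≤ r → g r ∈ Icc (0 : ℝ) 1)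
    (hanti : AntitoneOn g (Ici 0)) (hη : 0 ≤ η) {q : ℕ} (x : Fin d → ZMod q) :
    torusKer g η D q x ≤ torusKer g η D q (0 : Fin d → ZMod q) := by
  have h0 : torusKer g η D q (0 : Fin d → ZMod q) = g (η * (0 + √d)) := by
    have : intNorm (fun _ : Fin d => (0 : ℤ)) = 0 := by
      simp only [intNorm, Int.cast_zero]
      exact norm_zero
    simp [torusKer, cellKer, ZMod.valMinAbs_zero, this]
  rw [h0, torusKer, cellKer]
  split_ifs
  · refine hanti (mem_Ici.2 (by positivity)) ?_ ?_
    · exact mem_Ici.2 (mul_nonneg hη (add_nonneg (intNorm_nonneg _) (Real.sqrt_nonneg _)))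
    · exact mul_le_mul_of_nonneg_left (by linarith [intNorm_nonneg fun i => (x i).valMinAbs]) hη
  · exact (hg _ (by positivity)).1

theorem mem_win_of_torusKer_pos {q : ℕ} {x : Fin d → ZMod q}
    (h : 0 < torusKer g η D q x) : x ∈ win D 0 := by
  rw [torusKer, cellKer] at h
  split_ifs at h with hD
  · exact mem_win.2 ⟨_, hD, fun i => by simp [ZMod.coe_valMinAbs]⟩
  · exact h.false.elim

theorem valMinAbs_intCast {q : ℕ} [NeZero q] {k : ℤ} (hk : 2 * |k| < q) :
    (k : ZMod q).valMinAbs = k := by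
  rw [ZMod.valMinAbs_spec]
  refine ⟨rfl, ?_, ?_⟩ <;> cases abs_cases k <;> omega

theorem le_torusKer_of_mem_win (hanti : AntitoneOn g (Ici 0)) (hη : 0 ≤ η) (hD : 1 ≤ D) {q : ℕ}
    (hq : 2 < q) {x : Fin d → ZMod q} (hx : x ∈ win 1 0) :
    g (η * (√d + √d)) ≤ torusKer g η D q x := by
  have : NeZero q := ⟨by omega⟩
  obtain ⟨z, hz, hxz⟩ := mem_win.1 hx
  have hval : (fun i => (x i).valMinAbs) = z := by
    funext i
    rw [hxz i, Pi.zero_apply, zero_add, valMinAbs_intCast]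
    have := hz i
    push_cast at this
    omega
  rw [torusKer, hval, cellKer, if_pos fun i => (hz i).trans (by exact_mod_cast hD)]
  have h1 : intNorm z ≤ √d := norm_le_sqrt_of_abs_le_one fun i => by
    have := hz i
    simp only
    exact_mod_cast this
  refine hanti ?_ (mem_Ici.2 (by positivity)) (by gcongr)
  exact mem_Ici.2 (mul_nonneg hη (add_nonneg (intNorm_nonneg z) (Real.sqrt_nonneg _)))

theorem sum_cellKer_le_sum_torusKer (hg : ∀ r : ℝ, 0 ≤ r → g r ∈ Icc (0 : ℝ) 1) (hη : 0 ≤ η)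
    {q : ℕ} [NeZero q] (hq : 2 * D < q) :
    ∑ z ∈ (Fintype.piFinset fun _ : Fin d => Finset.Icc (-(D : ℤ)) D).erase 0, cellKer g η D z ≤
      ∑ x ∈ Finset.univ.erase (0 : Fin d → ZMod q), torusKer g η D q x := by
  have hval : ∀ z ∈ (Fintype.piFinset fun _ : Fin d => Finset.Icc (-(D : ℤ)) D),
      (fun i => ((z i : ℤ) : ZMod q).valMinAbs) = z := by
    intro z hz
    funext i
    have h := Finset.mem_Icc.1 (Fintype.mem_piFinset.1 hz i)
    refine valMinAbs_intCast ?_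
    cases abs_cases (z i) <;> omega
  rw [Finset.sum_congr rfl fun z hz => show cellKer g η D z =
    torusKer g η D q (fun i => (z i : ZMod q)) by
      rw [torusKer, hval z (Finset.mem_of_mem_erase hz)]]
  rw [← Finset.sum_image (f := torusKer g η D q) (g := fun (z : Fin d → ℤ) i => ((z i : ℤ) : ZMod q))]
  · refine Finset.sum_le_sum_of_subset_of_nonneg ?_ fun x _ _ => (cellKer_mem hg hη _).1
    intro x hx
    obtain ⟨z, hz, rfl⟩ := Finset.mem_image.1 hx
    refine Finset.mem_erase.2 ⟨fun h => Finset.ne_of_mem_erase hz ?_, Finset.mem_univ _⟩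
    rw [← hval z (Finset.mem_of_mem_erase hz)]
    funext i
    rw [congrFun h i]
    simp
  · intro z hz z' hz' h
    rw [← hval z (Finset.mem_of_mem_erase hz), ← hval z' (Finset.mem_of_mem_erase hz')]
    funext i
    exact congrArg ZMod.valMinAbs (congrFun h i)

theorem adj_of_edgeVar_le {Ω : Type*} [MeasurableSpace Ω] {P : Measure Ω} (M : Model d P) {n : ℕ}
    {r : ℝ} (hr : 0 < r) (hη : 0 < η) {q : ℕ} [NeZero q] (hq : 1 ≤ η * r * q) {ω : Ω} {i j : ℕ}
    (hij : i ≠ j) (hi : i ∈ Finset.Icc 1 (M.N n ω)) (hj : j ∈ Finset.Icc 1 (M.N n ω))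
    (hpos : 0 < torusKer M.g η D q (label q (M.X i ω) - label q (M.X j ω)))
    (hle : edgeVar M i j ω ≤ torusKer M.g η D q (label q (M.X i ω) - label q (M.X j ω))) :
    adj M n r ω i j := by
  rw [Finset.mem_Icc] at hi hj
  refine ⟨hij, hi.1, hj.1, hi.2, hj.2, hle.trans ?_⟩
  have hq0 : (0 : ℝ) < q := by exact_mod_cast NeZero.pos q
  rw [torusKer, cellKer] at hpos ⊢
  split_ifs at hpos ⊢ with hD
  · have h1 := torusDist_le_of_label (q := q) (M.X i ω) (M.X j ω)
    refine M.g_antitone (mem_Ici.2 (div_nonneg (torusDist_nonneg _ _) hr.le)) ?_ ?_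
    · exact mem_Ici.2 (mul_nonneg hη.le (add_nonneg (intNorm_nonneg _) (Real.sqrt_nonneg _)))
    · rw [div_le_iff₀ hr]
      refine h1.trans ?_
      rw [div_le_iff₀ hq0]
      have h2 : 0 ≤ intNorm (fun i_1 => ((label q (M.X i ω) - label q (M.X j ω)) i_1).valMinAbs)
          + √d := add_nonneg (intNorm_nonneg _) (Real.sqrt_nonneg _)
      calc _ = 1 * _ := (one_mul _).symm
        _ ≤ _ := mul_le_mul_of_nonneg_right hq h2
        _ = _ := by ring
  · exact hpos.false.elim
end Kernel

theorem exists_pos_of_integral_pos {d : ℕ} [NeZero d] {g : ℝ → ℝ}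
    (hα : 0 < ∫ x : EuclideanSpace ℝ (Fin d), g ‖x‖)
    (hg : ∀ r : ℝ, 0 ≤ r → g r ∈ Icc (0 : ℝ) 1) : ∃ s : ℝ, 0 < s ∧ 0 < g s := by
  by_contra! h
  have h0 : (fun x : EuclideanSpace ℝ (Fin d) => g ‖x‖) =ᵐ[volume] 0 := by
    filter_upwards [Measure.ae_ne volume (0 : EuclideanSpace ℝ (Fin d))] with x hx
    exact le_antisymm (h _ (norm_pos_iff.2 hx)) (hg _ (norm_nonneg x)).1
  rw [integral_congr_ae h0] at hα
  simp at hα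

/-- The cell with lower corner `η z` of the cubic lattice of mesh `η`. -/
def latticeCell {d : ℕ} (η : ℝ) (z : Fin d → ℤ) : Set (EuclideanSpace ℝ (Fin d)) :=
  WithLp.ofLp ⁻¹' Set.pi univ fun i => Ico (η * z i) (η * (z i + 1))

theorem measurableSet_latticeCell {d : ℕ} (η : ℝ) (z : Fin d → ℤ) :
    MeasurableSet (latticeCell η z) :=
  (PiLp.volume_preserving_ofLp (Fin d)).measurable
    (MeasurableSet.univ_pi fun _ => measurableSet_Ico)

theorem volume_latticeCell {d : ℕ} {η : ℝ} (hη : 0 ≤ η) (z : Fin d → ℤ) :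
    volume (latticeCell η z) = ENNReal.ofReal (η ^ d) := by
  rw [latticeCell, (PiLp.volume_preserving_ofLp (Fin d)).measure_preimage
    (MeasurableSet.univ_pi fun _ => measurableSet_Ico).nullMeasurableSet, volume_pi_pi]
  simp only [Real.volume_Ico]
  rw [Finset.prod_congr rfl fun j _ => show _ = ENNReal.ofReal η by congr 1; ring]
  rw [Finset.prod_const, Finset.card_univ, Fintype.card_fin, ENNReal.ofReal_pow hη]

theorem exists_cell_of_mem_annulus {d : ℕ} {g : ℝ → ℝ} (hanti : AntitoneOn g (Ici 0)) {η t a b : ℝ}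
    (hη : 0 < η) (ha : η * √d < a) (hta : 2 * (η * √d) ≤ (t - 1) * a) {D : ℕ}
    (hD : b / η + 1 ≤ D) {u : EuclideanSpace ℝ (Fin d)} (hu : a ≤ ‖u‖) (hub : ‖u‖ ≤ b)
    (ht : 1 ≤ t) :
    ∃ z ∈ (Fintype.piFinset fun _ : Fin d => Finset.Icc (-(D : ℤ)) D).erase 0,
      u ∈ latticeCell η z ∧ g (t * ‖u‖) ≤ cellKer g η D z := by
  let z : Fin d → ℤ := fun i => ⌊u i / η⌋
  have hz1 : ∀ i, (z i : ℝ) * η ≤ u i := fun i => (le_div_iff₀ hη).1 (Int.floor_le _)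
  have hz2 : ∀ i, u i < (z i + 1) * η := fun i => (div_lt_iff₀ hη).1 (Int.lt_floor_add_one _)
  have hcell : u ∈ latticeCell η z := fun i _ =>
    ⟨by simpa [mul_comm] using hz1 i, by simpa [mul_comm] using hz2 i⟩
  let v : EuclideanSpace ℝ (Fin d) := η⁻¹ • u - WithLp.toLp 2 fun i => (z i : ℝ)
  have hvi : ∀ i, v i = u i / η - z i := fun i => by simp [v]; ring
  have hv : ‖v‖ ≤ √d := norm_le_sqrt_of_abs_le_one fun i => by
    rw [hvi, abs_le]
    constructor
    · linarith [Int.floor_le (u i / η)]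
    · linarith [Int.lt_floor_add_one (u i / η)]
  have huv : u = η • ((WithLp.toLp 2 fun i => (z i : ℝ)) + v) := by
    simp [v, smul_smul, hη.ne']
  have hnz : intNorm z ≤ ‖u‖ / η + √d := by
    have h1 : (WithLp.toLp 2 fun i => (z i : ℝ)) = η⁻¹ • u - v := by simp [v]
    rw [intNorm, h1]
    refine (norm_sub_le _ _).trans (add_le_add (le_of_eq ?_) hv)
    rw [norm_smul, norm_inv, Real.norm_of_nonneg hη.le]
    ring
  have hbox : ∀ i, |z i| ≤ D := by
    intro i
    have h1 : |u i| ≤ b := (PiLp.norm_apply_le u i).trans hub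
    have h2 := abs_le.1 h1
    have h3 : (z i : ℝ) ≤ b / η := (Int.floor_le _).trans (by gcongr; exact h2.2)
    have h4 : -(b / η) - 1 ≤ z i := by
      have h5 := Int.lt_floor_add_one (u i / η)
      have h6 : -(b / η) ≤ u i / η := by
        rw [← neg_div]
        gcongr
        exact h2.1
      change u i / η < z i + 1 at h5
      linarith
    have h7 : |(z i : ℝ)| ≤ D := abs_le.2 ⟨by linarith, by linarith⟩
    exact_mod_cast h7
  refine ⟨z, Finset.mem_erase.2 ⟨fun h => ?_, ?_⟩, hcell, ?_⟩
  · have h1 : ‖u‖ ≤ η * √d := by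
      have h2 : (WithLp.toLp 2 fun i => (z i : ℝ)) = (0 : EuclideanSpace ℝ (Fin d)) := by
        ext i
        simp [h]
      rw [huv, h2, zero_add, norm_smul, Real.norm_of_nonneg hη.le]
      gcongr
    linarith
  · exact Fintype.mem_piFinset.2 fun i => Finset.mem_Icc.2 (abs_le.1 (hbox i))
  · rw [cellKer, if_pos hbox]
    refine hanti (mem_Ici.2 (mul_nonneg hη.le
      (add_nonneg (intNorm_nonneg z) (Real.sqrt_nonneg _)))) (mem_Ici.2 (by positivity)) ?_
    calc η * (intNorm z + √d) ≤ η * (‖u‖ / η + √d + √d) := by gcongr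
      _ = ‖u‖ + 2 * (η * √d) := by field_simp; ring
      _ ≤ ‖u‖ + (t - 1) * a := by linarith
      _ ≤ ‖u‖ + (t - 1) * ‖u‖ := by
        have := mul_le_mul_of_nonneg_left hu (sub_nonneg.2 ht)
        linarith
      _ = t * ‖u‖ := by ring

theorem setIntegral_annulus_le {d : ℕ} {g : ℝ → ℝ} (hanti : AntitoneOn g (Ici 0))
    (hg : ∀ r : ℝ, 0 ≤ r → g r ∈ Icc (0 : ℝ) 1) {η t a b : ℝ}
    (hgi : Integrable fun x : EuclideanSpace ℝ (Fin d) => g (t * ‖x‖))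
    (hη : 0 < η) (ha : η * √d < a) (hta : 2 * (η * √d) ≤ (t - 1) * a) {D : ℕ}
    (hD : b / η + 1 ≤ D) (ht : 1 ≤ t) :
    ∫ u in {u : EuclideanSpace ℝ (Fin d) | a ≤ ‖u‖ ∧ ‖u‖ ≤ b}, g (t * ‖u‖) ≤
      η ^ d * ∑ z ∈ (Fintype.piFinset fun _ : Fin d => Finset.Icc (-(D : ℤ)) D).erase 0,
        cellKer g η D z := by
  set box := (Fintype.piFinset fun _ : Fin d => Finset.Icc (-(D : ℤ)) D).erase 0
  have hm : MeasurableSet {u : EuclideanSpace ℝ (Fin d) | a ≤ ‖u‖ ∧ ‖u‖ ≤ b} :=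
    (measurableSet_le measurable_const measurable_norm).inter
      (measurableSet_le measurable_norm measurable_const)
  have hcell : ∀ z : Fin d → ℤ, Integrable
      ((latticeCell η z).indicator fun _ => cellKer g η D z) volume := fun z => by
    refine (integrable_indicator_iff (measurableSet_latticeCell η z)).2 (integrableOn_const ?_)
    rw [volume_latticeCell hη.le]
    exact ENNReal.ofReal_ne_top
  have hnn : ∀ z ∈ box, ∀ u, 0 ≤ (latticeCell η z).indicator (fun _ => cellKer g η D z) u :=
    fun z _ u => indicator_nonneg (fun _ _ => (cellKer_mem hg hη.le z).1) u
  rw [← integral_indicator hm]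
  calc _ ≤ ∫ u, ∑ z ∈ box, (latticeCell η z).indicator (fun _ => cellKer g η D z) u := by
        refine integral_mono (hgi.indicator hm) (integrable_finsetSum _ fun z _ => hcell z) ?_
        intro u
        by_cases hu : u ∈ {u : EuclideanSpace ℝ (Fin d) | a ≤ ‖u‖ ∧ ‖u‖ ≤ b}
        · obtain ⟨z, hz, hzu, hle⟩ := exists_cell_of_mem_annulus hanti hη ha hta hD hu.1 hu.2 ht
          simp only [indicator_of_mem hu]
          refine hle.trans ?_
          refine le_trans ?_ (Finset.single_le_sum (fun z hz => hnn z hz u) hz)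
          simp [hzu]
        · simp only [indicator_of_notMem hu]
          exact Finset.sum_nonneg fun z hz => hnn z hz u
    _ = _ := by
        rw [integral_finsetSum _ fun z _ => hcell z, Finset.mul_sum]
        refine Finset.sum_congr rfl fun z _ => ?_
        rw [integral_indicator (measurableSet_latticeCell η z), setIntegral_const,
          measureReal_def, volume_latticeCell hη.le, ENNReal.toReal_ofReal (by positivity),
          smul_eq_mul]

theorem exists_discretisation {d : ℕ} [NeZero d] {g : ℝ → ℝ} (hanti : AntitoneOn g (Ici 0))
    (hg : ∀ r : ℝ, 0 ≤ r → g r ∈ Icc (0 : ℝ) 1) {α : ℝ}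
    (hgi : Integrable fun x : EuclideanSpace ℝ (Fin d) => g ‖x‖)
    (hα : α = ∫ x : EuclideanSpace ℝ (Fin d), g ‖x‖) {α' : ℝ} (hα' : α' < α) (hα0 : 0 < α) :
    ∃ η : ℝ, 0 < η ∧ ∃ D : ℕ, 1 ≤ D ∧ 0 < g (η * (√d + √d)) ∧
      α' < η ^ d * ∑ z ∈ (Fintype.piFinset fun _ : Fin d => Finset.Icc (-(D : ℤ)) D).erase 0,
        cellKer g η D z := by
  obtain ⟨s, hs, hgs⟩ := exists_pos_of_integral_pos (hα ▸ hα0) hg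
  obtain ⟨t, ht, htα⟩ : ∃ t : ℝ, 1 < t ∧ α' < (t ^ d)⁻¹ * α := by
    have hc : Tendsto (fun t : ℝ => (t ^ d)⁻¹ * α) (nhdsWithin 1 (Ioi 1))
        (nhds (((1 : ℝ) ^ d)⁻¹ * α)) := by
      refine Tendsto.mono_left ?_ nhdsWithin_le_nhds
      exact (((continuous_pow d).tendsto 1).inv₀ (by simp)).mul_const α
    rw [one_pow, inv_one, one_mul] at hc
    exact ((eventually_mem_nhdsWithin (s := Ioi (1 : ℝ))).and (hc.eventually_const_lt hα')).exists
  have ht0 : 0 < t := by linarith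
  have hcomp : (fun x : EuclideanSpace ℝ (Fin d) => g (t * ‖x‖)) =
      fun x => (fun y : EuclideanSpace ℝ (Fin d) => g ‖y‖) (t • x) := by
    funext x
    simp only [norm_smul, Real.norm_of_nonneg ht0.le]
  have hgi' : Integrable fun x : EuclideanSpace ℝ (Fin d) => g (t * ‖x‖) := by
    rw [hcomp]
    exact hgi.comp_smul ht0.ne'
  have hscale : ∫ x : EuclideanSpace ℝ (Fin d), g (t * ‖x‖) = (t ^ d)⁻¹ * α := by
    rw [hcomp, Measure.integral_comp_smul_of_nonneg volume
      (fun y : EuclideanSpace ℝ (Fin d) => g ‖y‖) t (hR := ht0.le), hα]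
    simp
  let A : ℕ → Set (EuclideanSpace ℝ (Fin d)) := fun k =>
    {u | ((k : ℝ) + 1)⁻¹ ≤ ‖u‖ ∧ ‖u‖ ≤ (k : ℝ) + 1}
  have hlim : Tendsto (fun k => ∫ u in A k, g (t * ‖u‖)) atTop (nhds ((t ^ d)⁻¹ * α)) := by
    have h1 := tendsto_setIntegral_of_monotone (μ := volume) (s := A)
      (f := fun u : EuclideanSpace ℝ (Fin d) => g (t * ‖u‖))
      (fun k => (measurableSet_le measurable_const measurable_norm).inter
        (measurableSet_le measurable_norm measurable_const)) ?_ hgi'.integrableOn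
    · have h2 : (⋃ k, A k) = {0}ᶜ := by
        ext u
        simp only [A, mem_iUnion, mem_compl_iff, mem_singleton_iff, Set.mem_ofPred_eq]
        constructor
        · rintro ⟨k, hk, _⟩ rfl
          rw [norm_zero] at hk
          have : (0 : ℝ) < ((k : ℝ) + 1)⁻¹ := by positivity
          linarith
        · intro hu
          have hu' := norm_pos_iff.2 hu
          obtain ⟨k, hk⟩ := exists_nat_ge (max ‖u‖ ‖u‖⁻¹)
          refine ⟨k, inv_le_of_inv_le₀ hu' ?_, ?_⟩
          · linarith [le_max_right ‖u‖ ‖u‖⁻¹]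
          · linarith [le_max_left ‖u‖ ‖u‖⁻¹]
      have h3 : ({0}ᶜ : Set (EuclideanSpace ℝ (Fin d))) =ᵐ[volume] univ := by
        rw [ae_eq_univ, compl_compl]
        exact measure_singleton _
      rw [h2, setIntegral_congr_set h3, setIntegral_univ, hscale] at h1
      exact h1
    · intro k l hkl u hu
      have hkl' : (k : ℝ) ≤ l := by exact_mod_cast hkl
      exact ⟨(inv_anti₀ (by positivity) (by linarith)).trans hu.1, hu.2.trans (by linarith)⟩
  obtain ⟨k, hk⟩ := (hlim.eventually_const_lt htα).exists
  set a : ℝ := ((k : ℝ) + 1)⁻¹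
  have ha : 0 < a := by positivity
  have hd : 0 < √(d : ℝ) := Real.sqrt_pos.2 (by exact_mod_cast NeZero.pos d)
  obtain ⟨δ, hδ, hδ1, hδ2, hδ3⟩ : ∃ δ : ℝ, 0 < δ ∧ δ < a ∧ 2 * δ ≤ (t - 1) * a ∧ 2 * δ ≤ s := by
    have h1 : 0 < (t - 1) * a := mul_pos (by linarith) ha
    refine ⟨min (a / 2) (min ((t - 1) * a / 2) (s / 2)), by positivity, ?_, ?_, ?_⟩
    · exact (min_le_left _ _).trans_lt (by linarith)
    · linarith [(min_le_right (a / 2) (min ((t - 1) * a / 2) (s / 2))).trans (min_le_left _ _)]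
    · linarith [(min_le_right (a / 2) (min ((t - 1) * a / 2) (s / 2))).trans (min_le_right _ _)]
  set η := δ / √d
  have hη : 0 < η := by positivity
  have hηδ : η * √d = δ := div_mul_cancel₀ _ hd.ne'
  obtain ⟨D, hD⟩ := exists_nat_ge (((k : ℝ) + 1) / η + 1)
  refine ⟨η, hη, D, ?_, ?_, ?_⟩
  · have : (1 : ℝ) ≤ D := le_trans (by have : 0 ≤ ((k : ℝ) + 1) / η := by positivity
                                       linarith) hD
    exact_mod_cast this
  · refine hgs.trans_le (hanti (mem_Ici.2 (by positivity)) (mem_Ici.2 hs.le) ?_)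
    rw [mul_add, hηδ]
    linarith
  · exact hk.trans_le (setIntegral_annulus_le hanti hg hgi' hη (by rwa [hηδ]) (by rwa [hηδ]) hD ht.le)

/-- Union bound over the vertex sets `R` of size at most `K` and the positions of `R`. -/
theorem measureReal_le_of_forall_labels [IsFiniteMeasure P] {Γ : Type*} [DecidableEq Γ]
    (c : ℕ → Ω → Γ) {m K b : ℕ} {W : Finset Γ} (hW : W.card ≤ b) {A : Set Ω}
    (E : Finset ℕ → Set Ω) {B x : ℝ} (hB : 0 ≤ B) (hx : 0 ≤ x)
    (hA : ∀ ω ∈ A, ∃ R ⊆ Finset.Icc 1 m, R.card ≤ K ∧ (∀ r ∈ R, c r ω ∈ W) ∧ ω ∈ E R)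
    (hE : ∀ R ⊆ Finset.Icc 1 m, R.card ≤ K → ∀ ψ : ℕ → Γ, (∀ r ∈ R, ψ r ∈ W) →
      P.real {ω | ω ∈ E R ∧ ∀ r ∈ R, c r ω = ψ r} ≤ B * x ^ R.card) :
    P.real A ≤ B * ((K + 1) * (1 + m * b * x) ^ K) := by
  classical
  by_cases hne : Nonempty Γ
  swap
  · rcases A.eq_empty_or_nonempty with rfl | ⟨ω, -⟩
    · simp only [measureReal_empty]
      positivity
    · exact (hne ⟨c 0 ω⟩).elim
  let Ω' : Finset ℕ → Finset (ℕ → Γ) := fun R =>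
    (Fintype.piFinset fun _ : R => W).image fun φ r =>
      if h : r ∈ R then φ ⟨r, h⟩ else Classical.arbitrary Γ
  have hΩW : ∀ R, ∀ ψ ∈ Ω' R, ∀ r ∈ R, ψ r ∈ W := by
    intro R ψ hψ r hr
    obtain ⟨φ, hφ, rfl⟩ := Finset.mem_image.1 hψ
    simpa [hr] using Fintype.mem_piFinset.1 hφ ⟨r, hr⟩
  have hΩcard : ∀ R, (Ω' R).card ≤ b ^ R.card := by
    intro R
    refine Finset.card_image_le.trans ?_
    rw [Fintype.card_piFinset, Finset.prod_const, Finset.card_univ, Fintype.card_coe]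
    exact Nat.pow_le_pow_left hW _
  let I : ℕ → Finset (Finset ℕ) := fun k => (Finset.Icc 1 m).powersetCard k
  have hcover : A ⊆ ⋃ k ∈ Finset.range (K + 1), ⋃ R ∈ I k, ⋃ ψ ∈ Ω' R,
      {ω | ω ∈ E R ∧ ∀ r ∈ R, c r ω = ψ r} := by
    intro ω hω
    obtain ⟨R, hR, hRK, hRW, hRE⟩ := hA ω hω
    simp only [Set.mem_iUnion]
    refine ⟨R.card, Finset.mem_range.2 (by omega), R, Finset.mem_powersetCard.2 ⟨hR, rfl⟩,
      fun r => if r ∈ R then c r ω else Classical.arbitrary Γ, ?_, hRE, ?_⟩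
    · refine Finset.mem_image.2 ⟨fun r => c r ω, Fintype.mem_piFinset.2 fun r => hRW r r.2, ?_⟩
      funext r
      simp
    · intro r hr
      simp [hr]
  have hterm : ∀ k ∈ Finset.range (K + 1), ∑ R ∈ I k, ∑ ψ ∈ Ω' R,
      P.real {ω | ω ∈ E R ∧ ∀ r ∈ R, c r ω = ψ r} ≤ B * (1 + m * b * x) ^ K := by
    intro k hk
    have hkK : k ≤ K := by have := Finset.mem_range.1 hk; omega
    calc _ ≤ ∑ R ∈ I k, (b ^ k : ℝ) * (B * x ^ k) := by
          refine Finset.sum_le_sum fun R hR => ?_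
          obtain ⟨hRm, rfl⟩ := Finset.mem_powersetCard.1 hR
          calc _ ≤ ∑ ψ ∈ Ω' R, B * x ^ R.card :=
                Finset.sum_le_sum fun ψ hψ => hE R hRm hkK ψ (hΩW R ψ hψ)
            _ = (Ω' R).card * (B * x ^ R.card) := by rw [Finset.sum_const, nsmul_eq_mul]
            _ ≤ _ := by
              refine mul_le_mul_of_nonneg_right ?_ (by positivity)
              exact_mod_cast hΩcard R
      _ = (m.choose k : ℝ) * ((b ^ k : ℝ) * (B * x ^ k)) := by
          rw [Finset.sum_const, nsmul_eq_mul, Finset.card_powersetCard, Nat.card_Icc,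
            Nat.add_sub_cancel]
      _ ≤ (m : ℝ) ^ k * ((b ^ k : ℝ) * (B * x ^ k)) := by
          refine mul_le_mul_of_nonneg_right ?_ (by positivity)
          exact_mod_cast Nat.choose_le_pow m k
      _ = B * (m * b * x) ^ k := by rw [mul_pow, mul_pow]; ring
      _ ≤ B * (1 + m * b * x) ^ k := by gcongr; linarith
      _ ≤ B * (1 + m * b * x) ^ K := by
          refine mul_le_mul_of_nonneg_left (pow_le_pow_right₀ ?_ hkK) hB
          have : 0 ≤ m * b * x := by positivity
          linarith
  calc P.real A ≤ _ := measureReal_mono hcover (measure_ne_top _ _)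
    _ ≤ ∑ k ∈ Finset.range (K + 1), ∑ R ∈ I k, ∑ ψ ∈ Ω' R,
        P.real {ω | ω ∈ E R ∧ ∀ r ∈ R, c r ω = ψ r} := by
        refine (measureReal_biUnion_finset_le _ _).trans (Finset.sum_le_sum fun k _ => ?_)
        refine (measureReal_biUnion_finset_le _ _).trans (Finset.sum_le_sum fun R _ => ?_)
        exact measureReal_biUnion_finset_le _ _
    _ ≤ ∑ k ∈ Finset.range (K + 1), B * (1 + m * b * x) ^ K := Finset.sum_le_sum hterm
    _ = _ := by
        rw [Finset.sum_const, nsmul_eq_mul, Finset.card_range]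
        push_cast
        ring

/-- Exponential form of `measureReal_no_hit_le`. -/
theorem measureReal_no_hit_le_exp (M : Model d P) {q : ℕ} [NeZero q] (n : ℕ) {m K : ℕ}
    {R : Finset ℕ} (hR : R ⊆ Finset.Icc 1 m) (hRK : R.card ≤ K) (ψ : ℕ → Fin d → ZMod q)
    (Y : Finset (Fin d → ZMod q)) (τ : (Fin d → ZMod q) → Finset ℕ) (hτ : ∀ y ∈ Y, τ y ⊆ R)
    {κ : (Fin d → ZMod q) → ℝ} (hκ : ∀ x, κ x ∈ Icc (0 : ℝ) 1) {σ : ℝ} (hσ : 0 ≤ σ)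
    (hsum : σ ≤ ∑ y ∈ Y, ∏ r ∈ τ y, κ (y - ψ r)) :
    P.real {ω | M.N n ω = m ∧ (∀ r ∈ R, label q (M.X r ω) = ψ r) ∧ ∀ x ∈ Finset.Icc 1 m \ R,
      ¬ (label q (M.X x ω) ∈ Y ∧ ∀ r ∈ τ (label q (M.X x ω)),
        edgeVar M x r ω ≤ κ (label q (M.X x ω) - ψ r))} ≤
    P.real {ω | M.N n ω = m} * Real.exp (-(σ / (q : ℝ) ^ d)) ^ (m - K) *
      ((q : ℝ) ^ d)⁻¹ ^ R.card := by
  have hcard : (Fintype.card (Fin d → ZMod q) : ℝ) = (q : ℝ) ^ d := by simp [ZMod.card]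
  have hq : (0 : ℝ) < (q : ℝ) ^ d := by
    have : (0 : ℝ) < q := by exact_mod_cast NeZero.pos q
    positivity
  have h := measureReal_no_hit_le M (label q) measurable_label
    (fun i hi a => measureReal_label_eq_le M hi a) n m R hR ψ Y τ hτ (fun y r => κ (y - ψ r))
    (fun y r => hκ _)
  refine h.trans ?_
  rw [hcard, mul_assoc, mul_comm (Real.exp _ ^ _)]
  refine mul_le_mul_of_nonneg_left (mul_le_mul_of_nonneg_left ?_ (by positivity))
    measureReal_nonneg
  set S := ∑ y ∈ Y, ∏ r ∈ τ y, κ (y - ψ r)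
  have hS : S ≤ (q : ℝ) ^ d := by
    calc S ≤ ∑ y ∈ Y, (1 : ℝ) := Finset.sum_le_sum fun y _ =>
          Finset.prod_le_one (fun r _ => (hκ _).1) fun r _ => (hκ _).2
      _ = Y.card := by simp
      _ ≤ Fintype.card (Fin d → ZMod q) := by exact_mod_cast Finset.card_le_univ Y
      _ = _ := hcard
  have h1 : 0 ≤ 1 - S / (q : ℝ) ^ d := sub_nonneg.2 ((div_le_one hq).2 hS)
  have h2 : 1 - S / (q : ℝ) ^ d ≤ Real.exp (-(σ / (q : ℝ) ^ d)) := by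
    have h3 : σ / (q : ℝ) ^ d ≤ S / (q : ℝ) ^ d := by gcongr
    linarith [Real.add_one_le_exp (-(σ / (q : ℝ) ^ d))]
  have h4 : Real.exp (-(σ / (q : ℝ) ^ d)) ≤ 1 := Real.exp_le_one_iff.2 (by
    have : 0 ≤ σ / (q : ℝ) ^ d := by positivity
    linarith)
  exact (pow_le_pow_left₀ h1 h2 _).trans
    (pow_le_pow_of_le_one (Real.exp_pos _).le h4 (by omega))

/-- With high probability every small set of vertices located in the window around `o` has an
edge towards a vertex in a new cell. -/
theorem measureReal_no_growth_le (M : Model d P) {q : ℕ} [NeZero q] (n m K w D b : ℕ)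
    {κ : (Fin d → ZMod q) → ℝ} (hκ : ∀ x, κ x ∈ Icc (0 : ℝ) 1) (hmax : ∀ x, κ x ≤ κ 0)
    (hD : ∀ x, 0 < κ x → x ∈ win D 0) {σ : ℝ} (hσ : 0 ≤ σ)
    (hsum : σ ≤ ∑ x ∈ Finset.univ.erase 0, κ x)
    (hord : ((K + (2 * D + 1) ^ d : ℕ) : ℕ∞) ≤ AddMonoid.minOrder (Fin d → ZMod q))
    (o : Fin d → ZMod q) (hb : (win w o).card ≤ b) :
    P.real {ω | M.N n ω = m ∧ ∃ R ⊆ Finset.Icc 1 m, R.card ≤ K ∧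
      (∀ r ∈ R, label q (M.X r ω) ∈ win w o) ∧ R.Nonempty ∧ ∀ x ∈ Finset.Icc 1 m,
      (∀ r ∈ R, label q (M.X x ω) ≠ label q (M.X r ω)) → ∀ r ∈ R,
        ¬ (edgeVar M x r ω ≤ κ (label q (M.X x ω) - label q (M.X r ω)) ∧
          0 < κ (label q (M.X x ω) - label q (M.X r ω)))} ≤
    P.real {ω | M.N n ω = m} * Real.exp (-(σ / (q : ℝ) ^ d)) ^ (m - K) *
      ((K + 1) * (1 + m * b * ((q : ℝ) ^ d)⁻¹) ^ K) := by
  classical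
  have hP : IsProbabilityMeasure P := M.U_indep.isProbabilityMeasure
  refine measureReal_le_of_forall_labels (fun r ω => label q (M.X r ω)) hb
    (fun R => {ω | M.N n ω = m ∧ R.Nonempty ∧ ∀ x ∈ Finset.Icc 1 m,
      (∀ r ∈ R, label q (M.X x ω) ≠ label q (M.X r ω)) → ∀ r ∈ R,
        ¬ (edgeVar M x r ω ≤ κ (label q (M.X x ω) - label q (M.X r ω)) ∧
          0 < κ (label q (M.X x ω) - label q (M.X r ω)))})
    (mul_nonneg measureReal_nonneg (by positivity)) (by positivity) ?_ ?_
  · rintro ω ⟨hN, R, h1, h2, h3, h4, h5⟩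
    exact ⟨R, h1, h2, h3, hN, h4, h5⟩
  intro R hR hRK ψ hψ
  rcases R.eq_empty_or_nonempty with rfl | hRne
  · have : {ω | ω ∈ {ω | M.N n ω = m ∧ (∅ : Finset ℕ).Nonempty ∧ ∀ x ∈ Finset.Icc 1 m,
      (∀ r ∈ (∅ : Finset ℕ), label q (M.X x ω) ≠ label q (M.X r ω)) → ∀ r ∈ (∅ : Finset ℕ),
        ¬ (edgeVar M x r ω ≤ κ (label q (M.X x ω) - label q (M.X r ω)) ∧
          0 < κ (label q (M.X x ω) - label q (M.X r ω)))} ∧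
        ∀ r ∈ (∅ : Finset ℕ), label q (M.X r ω) = ψ r} = ∅ := by
      ext ω
      simp
    rw [this, measureReal_empty]
    exact mul_nonneg (mul_nonneg measureReal_nonneg (by positivity)) (by positivity)
  set A := R.image ψ
  obtain ⟨ρ, hρA, hρ⟩ := exists_sum_kernel_ge (fun x => (hκ x).1) hmax (b := (2 * D + 1) ^ d)
    (K := K) ((Finset.card_le_card fun x hx => hD x (Finset.mem_filter.1 hx).2).trans
      (card_win_le D 0)) hord (A := A) (hRne.image ψ) (Finset.card_image_le.trans hRK)
  have hrep : ∀ y, ∃ r ∈ R, ψ r = ρ y := fun y => Finset.mem_image.1 (hρA y)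
  choose s hsR hs using hrep
  let Y : Finset (Fin d → ZMod q) := (Finset.univ \ A).filter fun y => 0 < κ (y - ρ y)
  have hY : σ ≤ ∑ y ∈ Y, ∏ r ∈ {s y}, κ (y - ψ r) := by
    simp only [Finset.prod_singleton, hs]
    rw [Finset.sum_filter_of_ne fun y _ h => lt_of_le_of_ne (hκ _).1 h.symm]
    exact hsum.trans hρ
  refine (measureReal_mono ?_ (measure_ne_top _ _)).trans (measureReal_no_hit_le_exp M n hR hRK ψ Y
    (fun y => {s y}) (fun y _ => Finset.singleton_subset_iff.2 (hsR y)) hκ hσ hY)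
  rintro ω ⟨⟨hN, -, hno⟩, hlab⟩
  refine ⟨hN, hlab, ?_⟩
  rintro x hx ⟨hxY, hedge⟩
  obtain ⟨hxA, hpos⟩ := Finset.mem_filter.1 hxY
  have hedge' := hedge _ (Finset.mem_singleton_self _)
  refine hno x (Finset.mem_sdiff.1 hx).1 (fun r hr h => ?_) _ (hsR (label q (M.X x ω))) ⟨?_, ?_⟩
  · exact (Finset.mem_sdiff.1 hxA).2 (Finset.mem_image.2 ⟨r, hr, by rw [h, hlab r hr]⟩)
  · rwa [hlab _ (hsR _)]
  · rwa [hlab _ (hsR _), hs]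

/-- A cell is bad if some pair of vertices near it has no common neighbour in the cell. -/
def badCell (M : Model d P) {q : ℕ} (κ : (Fin d → ZMod q) → ℝ) (m : ℕ) (ω : Ω)
    (a : Fin d → ZMod q) : Prop :=
  ∃ F ⊆ Finset.Icc 1 m, F.card ≤ 2 ∧ (∀ r ∈ F, label q (M.X r ω) ∈ win 1 a) ∧
    ∀ x ∈ Finset.Icc 1 m, x ∉ F → label q (M.X x ω) = a →
      ¬ ∀ r ∈ F, edgeVar M x r ω ≤ κ (a - label q (M.X r ω))

theorem sub_mem_win_zero {q u : ℕ} {a o : Fin d → ZMod q} (h : a ∈ win u o) : o - a ∈ win u 0 := by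
  have h1 := add_mem_win (b := -a) (win_comm h)
  rwa [add_neg_cancel, ← sub_eq_add_neg] at h1

theorem measureReal_all_bad_le (M : Model d P) {q : ℕ} [NeZero q] (n m J K w b : ℕ)
    (hK : 2 * J ≤ K)
    {κ : (Fin d → ZMod q) → ℝ} (hκ : ∀ x, κ x ∈ Icc (0 : ℝ) 1) {p : ℝ} (hp : 0 ≤ p)
    (hpκ : ∀ x ∈ win 1 (0 : Fin d → ZMod q), p ≤ κ x) {σ : ℝ} (hσ : 0 ≤ σ) (hJ : σ ≤ J * p ^ 2)
    (o : Fin d → ZMod q) (hb : (win (w + 1) o).card ≤ b) (T : Finset (Fin d → ZMod q))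
    (hT : T ⊆ win w o) (hTJ : T.card = J) :
    P.real {ω | M.N n ω = m ∧ ∀ a ∈ T, badCell M κ m ω a} ≤
    2 ^ (K * J) * (P.real {ω | M.N n ω = m} * Real.exp (-(σ / (q : ℝ) ^ d)) ^ (m - K)) *
      ((K + 1) * (1 + m * b * ((q : ℝ) ^ d)⁻¹) ^ K) := by
  classical
  have hP : IsProbabilityMeasure P := M.U_indep.isProbabilityMeasure
  have hp1 : p ≤ 1 := (hpκ 0 (self_mem_win _ _)).trans (hκ 0).2
  refine measureReal_le_of_forall_labels (fun r ω => label q (M.X r ω)) hb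
    (fun R => {ω | M.N n ω = m ∧ ∃ F : (Fin d → ZMod q) → Finset ℕ, ∀ a ∈ T, F a ⊆ R ∧
      (F a).card ≤ 2 ∧ (∀ r ∈ F a, label q (M.X r ω) ∈ win 1 a) ∧
      ∀ x ∈ Finset.Icc 1 m, x ∉ F a → label q (M.X x ω) = a →
        ¬ ∀ r ∈ F a, edgeVar M x r ω ≤ κ (a - label q (M.X r ω))})
    (mul_nonneg (by positivity) (mul_nonneg measureReal_nonneg (by positivity)))
    (by positivity) ?_ ?_
  · rintro ω ⟨hN, hbad⟩
    choose! F hF1 hF2 hF3 hF4 using hbad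
    refine ⟨T.biUnion F, Finset.biUnion_subset.2 hF1, ?_, ?_, hN, F, fun a ha =>
      ⟨Finset.subset_biUnion_of_mem F ha, hF2 a ha, hF3 a ha, hF4 a ha⟩⟩
    · refine (Finset.card_biUnion_le_card_mul T F 2 hF2).trans ?_
      omega
    · intro r hr
      obtain ⟨a, ha, hra⟩ := Finset.mem_biUnion.1 hr
      exact win_trans (hT ha) (hF3 a ha r hra)
  intro R hR hRK ψ hψ
  let I : Finset (T → Finset ℕ) := Fintype.piFinset fun a => R.powerset.filter fun F =>
    F.card ≤ 2 ∧ ∀ r ∈ F, ψ r ∈ win 1 a.1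
  have hIcard : (I.card : ℝ) ≤ 2 ^ (K * J) := by
    have h1 : I.card ≤ 2 ^ (K * J) := by
      rw [Fintype.card_piFinset, pow_mul]
      calc _ ≤ ∏ _a : T, 2 ^ K := Finset.prod_le_prod' fun a _ =>
            (Finset.card_filter_le _ _).trans (by
              rw [Finset.card_powerset]
              exact Nat.pow_le_pow_right (by norm_num) hRK)
        _ = _ := by simp [hTJ]
    exact_mod_cast h1
  let τ : (T → Finset ℕ) → (Fin d → ZMod q) → Finset ℕ := fun F a =>
    if h : a ∈ T then F ⟨a, h⟩ else ∅
  let Z : (T → Finset ℕ) → Set Ω := fun F =>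
    {ω | M.N n ω = m ∧ (∀ r ∈ R, label q (M.X r ω) = ψ r) ∧ ∀ x ∈ Finset.Icc 1 m \ R,
      ¬ (label q (M.X x ω) ∈ T ∧ ∀ r ∈ τ F (label q (M.X x ω)),
        edgeVar M x r ω ≤ κ (label q (M.X x ω) - ψ r))}
  have hZ : ∀ F ∈ I, P.real (Z F) ≤ P.real {ω | M.N n ω = m} *
      Real.exp (-(σ / (q : ℝ) ^ d)) ^ (m - K) * ((q : ℝ) ^ d)⁻¹ ^ R.card := by
    intro F hF
    have hF' : ∀ a (ha : a ∈ T), τ F a ⊆ R ∧ (τ F a).card ≤ 2 ∧ ∀ r ∈ τ F a, ψ r ∈ win 1 a := by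
      intro a ha
      have h := Finset.mem_filter.1 (Fintype.mem_piFinset.1 hF ⟨a, ha⟩)
      simp only [τ, ha, dif_pos]
      exact ⟨Finset.mem_powerset.1 h.1, h.2⟩
    refine measureReal_no_hit_le_exp M n hR hRK ψ T (τ F) (fun a ha => (hF' a ha).1) hκ hσ ?_
    calc σ ≤ J * p ^ 2 := hJ
      _ = ∑ _a ∈ T, p ^ 2 := by rw [Finset.sum_const, hTJ, nsmul_eq_mul]
      _ ≤ _ := Finset.sum_le_sum fun a ha => by
        calc p ^ 2 ≤ p ^ (τ F a).card := pow_le_pow_of_le_one hp hp1 (hF' a ha).2.1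
          _ = ∏ _r ∈ τ F a, p := by rw [Finset.prod_const]
          _ ≤ _ := Finset.prod_le_prod (fun _ _ => hp) fun r hr =>
            hpκ _ (sub_mem_win_zero ((hF' a ha).2.2 r hr))
  have hcover : {ω | ω ∈ {ω | M.N n ω = m ∧ ∃ F : (Fin d → ZMod q) → Finset ℕ, ∀ a ∈ T, F a ⊆ R ∧
      (F a).card ≤ 2 ∧ (∀ r ∈ F a, label q (M.X r ω) ∈ win 1 a) ∧
      ∀ x ∈ Finset.Icc 1 m, x ∉ F a → label q (M.X x ω) = a →
        ¬ ∀ r ∈ F a, edgeVar M x r ω ≤ κ (a - label q (M.X r ω))} ∧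
      ∀ r ∈ R, label q (M.X r ω) = ψ r} ⊆ ⋃ F ∈ I, Z F := by
    rintro ω ⟨⟨hN, F, hF⟩, hlab⟩
    simp only [Set.mem_iUnion]
    refine ⟨fun a => F a, Fintype.mem_piFinset.2 fun a => Finset.mem_filter.2
      ⟨Finset.mem_powerset.2 (hF a a.2).1, (hF a a.2).2.1, fun r hr => ?_⟩, hN, hlab, ?_⟩
    · rw [← hlab r ((hF a a.2).1 hr)]
      exact (hF a a.2).2.2.1 r hr
    · rintro x hx ⟨hxT, hedge⟩
      obtain ⟨hxm, hxR⟩ := Finset.mem_sdiff.1 hx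
      simp only [τ, hxT, dif_pos] at hedge
      obtain ⟨h1, -, -, h4⟩ := hF _ hxT
      refine h4 x hxm (fun h => hxR (h1 h)) rfl fun r hr => ?_
      rw [hlab r (h1 hr)]
      exact hedge r hr
  calc _ ≤ P.real (⋃ F ∈ I, Z F) := measureReal_mono hcover (measure_ne_top _ _)
    _ ≤ ∑ F ∈ I, P.real (Z F) := measureReal_biUnion_finset_le _ _
    _ ≤ ∑ F ∈ I, P.real {ω | M.N n ω = m} *
      Real.exp (-(σ / (q : ℝ) ^ d)) ^ (m - K) * ((q : ℝ) ^ d)⁻¹ ^ R.card := Finset.sum_le_sum hZ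
    _ = I.card * (P.real {ω | M.N n ω = m} *
      Real.exp (-(σ / (q : ℝ) ^ d)) ^ (m - K) * ((q : ℝ) ^ d)⁻¹ ^ R.card) := by
        rw [Finset.sum_const, nsmul_eq_mul]
    _ ≤ 2 ^ (K * J) * (P.real {ω | M.N n ω = m} *
      Real.exp (-(σ / (q : ℝ) ^ d)) ^ (m - K) * ((q : ℝ) ^ d)⁻¹ ^ R.card) := by
        refine mul_le_mul_of_nonneg_right hIcard ?_
        exact mul_nonneg (mul_nonneg measureReal_nonneg (by positivity)) (by positivity)
    _ = _ := by ring

/-- Deterministic criterion: if small vertex sets always grow and bad cells are locally sparse,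
then the graph is connected. -/
theorem connectedGraph_of_growth (hd : 2 ≤ d) (M : Model d P) {n J D w q : ℕ} {r η : ℝ} {ω : Ω}
    (hJ : 1 ≤ J) (hD : 1 ≤ D) (hqJ : 2 * J < q) (hq : 2 < q) (hw : J * J * D + 6 * J + 6 ≤ w)
    (hr : 0 < r) (hη : 0 < η) (hqr : 1 ≤ η * r * q) (hp : 0 < M.g (η * (√d + √d)))
    (hgrow : ∀ o : Fin d → ZMod q, ∀ R ⊆ Finset.Icc 1 (M.N n ω), R.card ≤ J * J →
      (∀ r ∈ R, label q (M.X r ω) ∈ win w o) → R.Nonempty → ∃ x ∈ Finset.Icc 1 (M.N n ω),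
      (∀ r ∈ R, label q (M.X x ω) ≠ label q (M.X r ω)) ∧ ∃ r ∈ R,
        edgeVar M x r ω ≤ torusKer M.g η D q (label q (M.X x ω) - label q (M.X r ω)) ∧
          0 < torusKer M.g η D q (label q (M.X x ω) - label q (M.X r ω)))
    (hbad : ∀ o : Fin d → ZMod q, ∀ T ⊆ win w o, T.card = J →
      ¬ ∀ a ∈ T, badCell M (torusKer M.g η D q) (M.N n ω) ω a) :
    connectedGraph M n r ω := by
  classical
  have : NeZero q := ⟨by omega⟩
  have : Std.Symm (adj M n r ω) := ⟨fun _ _ h => adj_symm h⟩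
  have key := reach_of_sparse_bad (⟨0, by omega⟩ : Fin d) ⟨1, by omega⟩ (by simp) hJ hqJ hw
    (Finset.Icc 1 (M.N n ω) : Set ℕ) (fun i => label q (M.X i ω))
    (Relation.ReflTransGen (adj M n r ω)) (fun _ => Relation.ReflTransGen.refl)
    (fun x y h => Relation.ReflTransGen.stdSymm.symm x y h)
    (fun _ _ _ h h' => h.trans h')
    (fun a => ¬ badCell M (torusKer M.g η D q) (M.N n ω) ω a) ?_ ?_ ?_ ?_
  · intro i j hi hi' hj hj'
    exact key i (by simp; omega) j (by simp; omega)
  · intro a ha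
    by_contra hno
    push Not at hno
    refine ha ⟨∅, Finset.empty_subset _, by simp, by simp, fun x hx _ hxa => ?_⟩
    exact (hno x hx hxa).elim
  · intro a ha x hx y hy hxa hya
    by_contra hno
    refine ha ⟨{x, y}, ?_, Finset.card_le_two, ?_, fun z hz hzF hza hedge => hno ?_⟩
    · intro t ht
      rcases Finset.mem_insert.1 ht with rfl | ht
      · exact hx
      · rw [Finset.mem_singleton.1 ht]
        exact hy
    · intro t ht
      rcases Finset.mem_insert.1 ht with rfl | ht
      · exact hxa
      · rw [Finset.mem_singleton.1 ht]
        exact hya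
    · have hadj : ∀ t ∈ Finset.Icc 1 (M.N n ω), t ∈ ({x, y} : Finset ℕ) →
          label q (M.X t ω) ∈ win 1 a → adj M n r ω z t := by
        intro t ht htF hta
        have hle := hedge t htF
        refine adj_of_edgeVar_le M hr hη hqr (fun h => hzF (h ▸ htF)) hz ht ?_ (by rwa [hza])
        rw [hza]
        exact hp.trans_le (le_torusKer_of_mem_win M.g_antitone hη.le hD hq (sub_mem_win_zero hta))
      exact (Relation.ReflTransGen.single (adj_symm (hadj x hx (by simp) hxa))).tail
        (hadj y hy (by simp) hya)
  · intro o R hR hRne hRJ _ hRw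
    obtain ⟨x, hx, hxR, r', hr', hle, hpos⟩ := hgrow o R (by exact_mod_cast hR) hRJ hRw hRne
    refine ⟨x, hx, hxR, r', hr', .single (adj_symm ?_), ?_⟩
    · exact adj_of_edgeVar_le M hr hη hqr (fun h => hxR r' hr' (h ▸ rfl)) hx (hR hr') hpos hle
    · have h1 := add_mem_win (b := label q (M.X r' ω)) (mem_win_of_torusKer_pos hpos)
      rwa [sub_add_cancel, zero_add] at h1
  · intro o T hT hTbad
    by_contra hTJ
    obtain ⟨T', hT', hcard⟩ := Finset.exists_subset_card_eq (not_lt.1 hTJ)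
    exact hbad o T' (hT'.trans hT) hcard fun a ha => not_not.1 (hTbad a (hT' ha))

theorem measureReal_not_connected_le (hd : 2 ≤ d) (M : Model d P) (n m : ℕ) {J D w q b K : ℕ}
    {r η σ : ℝ} (hJ : 1 ≤ J) (hD : 1 ≤ D) (hqJ : 2 * J < q) (hq : 2 < q) (hqD : 2 * D < q)
    (hw : J * J * D + 6 * J + 6 ≤ w) (hb : (2 * (w + 1) + 1) ^ d ≤ b) (hK : J * J ≤ K)
    (hK' : 2 * J ≤ K) (hprime : ∀ p, p.Prime → p ∣ q → K + (2 * D + 1) ^ d ≤ p)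
    (hr : 0 < r) (hη : 0 < η) (hqr : 1 ≤ η * r * q) (hp : 0 < M.g (η * (√d + √d)))
    (hσ : σ = ∑ z ∈ (Fintype.piFinset fun _ : Fin d => Finset.Icc (-(D : ℤ)) D).erase 0,
      cellKer M.g η D z) (hσJ : σ ≤ J * M.g (η * (√d + √d)) ^ 2) :
    P.real {ω | M.N n ω = m ∧ ¬ connectedGraph M n r ω} ≤ P.real {ω | M.N n ω = m} *
      ((q : ℝ) ^ d * Real.exp (-(σ / (q : ℝ) ^ d)) ^ (m - K) *
        ((1 + 2 ^ b * 2 ^ (K * J)) * ((K + 1) * (1 + m * b * ((q : ℝ) ^ d)⁻¹) ^ K))) := by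
  classical
  have : NeZero q := ⟨by omega⟩
  have hP : IsProbabilityMeasure P := M.U_indep.isProbabilityMeasure
  set κ : (Fin d → ZMod q) → ℝ := torusKer M.g η D q
  have hκ : ∀ x, κ x ∈ Icc (0 : ℝ) 1 := fun x => cellKer_mem M.g_mem hη.le _
  have hσ0 : 0 ≤ σ := hσ ▸ Finset.sum_nonneg fun z _ => (cellKer_mem M.g_mem hη.le z).1
  have hb' : ∀ o : Fin d → ZMod q, (win (w + 1) o).card ≤ b := fun o => (card_win_le _ o).trans hb
  have hb'' : ∀ o : Fin d → ZMod q, (win w o).card ≤ b := fun o =>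
    (Finset.card_le_card fun a ha => win_mono (Nat.le_succ w) ha).trans (hb' o)
  let A : (Fin d → ZMod q) → Set Ω := fun o => {ω | M.N n ω = m ∧ ∃ R ⊆ Finset.Icc 1 m, R.card ≤ K ∧
      (∀ r ∈ R, label q (M.X r ω) ∈ win w o) ∧ R.Nonempty ∧ ∀ x ∈ Finset.Icc 1 m,
      (∀ r ∈ R, label q (M.X x ω) ≠ label q (M.X r ω)) → ∀ r ∈ R,
        ¬ (edgeVar M x r ω ≤ κ (label q (M.X x ω) - label q (M.X r ω)) ∧
          0 < κ (label q (M.X x ω) - label q (M.X r ω)))}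
  let Z : Finset (Fin d → ZMod q) → Set Ω := fun T =>
    {ω | M.N n ω = m ∧ ∀ a ∈ T, badCell M κ m ω a}
  set B := P.real {ω | M.N n ω = m} * Real.exp (-(σ / (q : ℝ) ^ d)) ^ (m - K)
  set C := (K + 1) * (1 + m * b * ((q : ℝ) ^ d)⁻¹) ^ K
  have hB0 : 0 ≤ B := mul_nonneg measureReal_nonneg (by positivity)
  have hC0 : 0 ≤ C := by positivity
  have hA : ∀ o, P.real (A o) ≤ B * C := fun o =>
    measureReal_no_growth_le M n m K w D b hκ
      (fun x => torusKer_le_zero M.g_mem M.g_antitone hη.le x)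
      (fun x hx => mem_win_of_torusKer_pos hx) hσ0
      (hσ ▸ sum_cellKer_le_sum_torusKer M.g_mem hη.le hqD) (le_minOrder_pi_zmod hprime) o (hb'' o)
  have hZ : ∀ o, ∀ T ∈ (win w o).powersetCard J, P.real (Z T) ≤ 2 ^ (K * J) * B * C :=
    fun o T hT => measureReal_all_bad_le M n m J K w b hK' hκ hp.le
      (fun x hx => le_torusKer_of_mem_win M.g_antitone hη.le hD hq hx) hσ0 hσJ o (hb' o) T
      (Finset.mem_powersetCard.1 hT).1 (Finset.mem_powersetCard.1 hT).2
  have hcover : {ω | M.N n ω = m ∧ ¬ connectedGraph M n r ω} ⊆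
      ⋃ o ∈ (Finset.univ : Finset (Fin d → ZMod q)),
        A o ∪ ⋃ T ∈ (win w o).powersetCard J, Z T := by
    rintro ω ⟨hN, hnot⟩
    by_contra hout
    simp only [Finset.mem_univ, Set.iUnion_true, Set.mem_iUnion, Set.mem_union, not_exists,
      not_or] at hout
    refine hnot (connectedGraph_of_growth hd M hJ hD hqJ hq hw hr hη hqr hp ?_ ?_)
    · intro o R hR hRJ hRw hRne
      by_contra hno
      refine (hout o).1 ⟨hN, R, hN ▸ hR, hRJ.trans hK, hRw, hRne, fun x hx hxR r' hr' h => ?_⟩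
      exact hno ⟨x, by rwa [hN], hxR, r', hr', h⟩
    · intro o T hT hTJ hall
      exact (hout o).2 T (Finset.mem_powersetCard.2 ⟨hT, hTJ⟩) ⟨hN, hN ▸ hall⟩
  have hone : ∀ o, P.real (A o ∪ ⋃ T ∈ (win w o).powersetCard J, Z T) ≤
      (1 + 2 ^ b * 2 ^ (K * J)) * (B * C) := by
    intro o
    have hcard : (((win w o).powersetCard J).card : ℝ) ≤ 2 ^ b := by
      have h1 : ((win w o).powersetCard J).card ≤ 2 ^ b := by
        rw [Finset.card_powersetCard]
        exact (Nat.choose_le_two_pow _ _).trans (Nat.pow_le_pow_right (by norm_num) (hb'' o))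
      exact_mod_cast h1
    calc _ ≤ P.real (A o) + P.real (⋃ T ∈ (win w o).powersetCard J, Z T) :=
          measureReal_union_le _ _
      _ ≤ B * C + ∑ T ∈ (win w o).powersetCard J, 2 ^ (K * J) * B * C :=
          add_le_add (hA o) ((measureReal_biUnion_finset_le _ _).trans
            (Finset.sum_le_sum (hZ o)))
      _ = B * C + ((win w o).powersetCard J).card * (2 ^ (K * J) * B * C) := by
          rw [Finset.sum_const, nsmul_eq_mul]
      _ ≤ B * C + 2 ^ b * (2 ^ (K * J) * B * C) := by gcongr
      _ = _ := by ring
  calc _ ≤ _ := measureReal_mono hcover (measure_ne_top _ _)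
    _ ≤ ∑ o : Fin d → ZMod q, (1 + 2 ^ b * 2 ^ (K * J)) * (B * C) :=
        (measureReal_biUnion_finset_le _ _).trans (Finset.sum_le_sum fun o _ => hone o)
    _ = (q : ℝ) ^ d * ((1 + 2 ^ b * 2 ^ (K * J)) * (B * C)) := by
        rw [Finset.sum_const, nsmul_eq_mul, Finset.card_univ]
        simp [ZMod.card]
    _ = _ := by ring

/-- Chernoff bound for the Poisson distribution, covering both tails. -/
theorem measureReal_poisson_tail_le (M : Model d P) {a : ℝ} (ha : 0 < a) (n : ℕ) :
    P.real {ω | 0 ≤ (M.N n ω - a * n) * Real.log a} ≤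
      Real.exp (a - 1 - a * Real.log a) ^ n := by
  set f : ℕ → ℝ := fun k => Real.exp (-(n : ℝ)) * Real.exp (-(a * n * Real.log a)) *
    ((a * n) ^ k / k.factorial)
  have hf : HasSum f (Real.exp (a - 1 - a * Real.log a) ^ n) := by
    have h := (NormedSpace.expSeries_div_hasSum_exp (a * n : ℝ)).mul_left
      (Real.exp (-(n : ℝ)) * Real.exp (-(a * n * Real.log a)))
    rw [← Real.exp_eq_exp_ℝ] at h
    have heq : Real.exp (-(n : ℝ)) * Real.exp (-(a * n * Real.log a)) * Real.exp (a * n) =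
        Real.exp (a - 1 - a * Real.log a) ^ n := by
      rw [← Real.exp_nat_mul, ← Real.exp_add, ← Real.exp_add]
      congr 1
      ring
    rwa [heq] at h
  have hf0 : ∀ k, 0 ≤ f k := fun k => by positivity
  refine ENNReal.toReal_le_of_le_ofReal (by positivity) ?_
  rw [← hf.tsum_eq, ENNReal.ofReal_tsum_of_nonneg hf0 hf.summable]
  calc P {ω | 0 ≤ (M.N n ω - a * n) * Real.log a}
      ≤ P (⋃ k, {ω | M.N n ω = k ∧ 0 ≤ (k - a * n) * Real.log a}) :=
        measure_mono fun ω hω => Set.mem_iUnion.2 ⟨M.N n ω, rfl, hω⟩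
    _ ≤ _ := measure_iUnion_le _
    _ ≤ _ := ENNReal.tsum_le_tsum fun k => ?_
  by_cases hk : 0 ≤ (k - a * n) * Real.log a
  · refine (measure_mono fun ω hω => hω.1).trans ((M.N_poisson n k).trans_le ?_)
    refine ENNReal.ofReal_le_ofReal ?_
    have h1 : 1 ≤ Real.exp (-(a * n * Real.log a)) * a ^ k := by
      rw [← Real.exp_log (pow_pos ha k), Real.log_pow, ← Real.exp_add]
      exact Real.one_le_exp (by linarith)
    calc _ = Real.exp (-(n : ℝ)) * (n : ℝ) ^ k / k.factorial * 1 := by ring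
      _ ≤ Real.exp (-(n : ℝ)) * (n : ℝ) ^ k / k.factorial *
          (Real.exp (-(a * n * Real.log a)) * a ^ k) :=
        mul_le_mul_of_nonneg_left h1 (by positivity)
      _ = f k := by simp only [f, mul_pow]; ring
  · simp [hk]

theorem tendsto_measureReal_poisson_tail (M : Model d P) {a : ℝ} (ha : 0 < a) (ha1 : a ≠ 1) :
    Tendsto (fun n : ℕ => P.real {ω | 0 ≤ (M.N n ω - a * n) * Real.log a}) atTop (nhds 0) := by
  have hlt : Real.exp (a - 1 - a * Real.log a) < 1 := by
    have h := Real.log_lt_sub_one_of_pos (inv_pos.2 ha) (inv_ne_one.2 ha1)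
    rw [Real.log_inv] at h
    have h2 := mul_lt_mul_of_pos_left h ha
    rw [mul_sub, mul_inv_cancel₀ ha.ne'] at h2
    exact Real.exp_lt_one_iff.2 (by linarith)
  exact squeeze_zero (fun _ => measureReal_nonneg) (measureReal_poisson_tail_le M ha)
    (tendsto_pow_atTop_nhds_zero_of_lt_one (Real.exp_pos _).le hlt)

theorem tendsto_exp_neg_mul_one_add_pow {ε C : ℝ} (hε : 0 < ε) (hC : 0 ≤ C) (K : ℕ) :
    Tendsto (fun x : ℝ => Real.exp (-(ε * x)) * (1 + C * x) ^ K) atTop (nhds 0) := by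
  have h1 : Tendsto (fun x : ℝ => ((1 + C) / ε) ^ K * ((ε * x) ^ K * Real.exp (-(ε * x))))
      atTop (nhds 0) := by
    have h := ((Real.tendsto_pow_mul_exp_neg_atTop_nhds_zero K).comp
      (tendsto_id.const_mul_atTop hε)).const_mul (((1 + C) / ε) ^ K)
    rw [mul_zero] at h
    exact h
  refine squeeze_zero' ?_ ?_ h1
  · filter_upwards [eventually_ge_atTop 0] with x hx
    positivity
  · filter_upwards [eventually_ge_atTop 1] with x hx
    have h2 : (1 + C * x) ^ K ≤ ((1 + C) * x) ^ K :=
      pow_le_pow_left₀ (by positivity) (by nlinarith) K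
    calc _ ≤ Real.exp (-(ε * x)) * ((1 + C) * x) ^ K := by gcongr
      _ = _ := by
        rw [show (1 + C) * x = (1 + C) / ε * (ε * x) by field_simp, mul_pow]
        ring

/-- The error bound vanishes as soon as a cell carries `σ n / Q n ≈ (σ / ℓ) log n` expected
connections with `a σ / ℓ > 1`. -/
theorem tendsto_error_bound {Q : ℕ → ℝ} {ℓ σ a b C : ℝ} (K : ℕ) (hℓ : 0 < ℓ) (hσ : 0 ≤ σ)
    (hb : 0 ≤ b) (hC : 0 ≤ C) (ha : ℓ < a * σ) (hQ1 : ∀ᶠ n in atTop, 1 ≤ Q n)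
    (hQ : Tendsto (fun n : ℕ => Q n * (Real.log n / n)) atTop (nhds ℓ)) :
    Tendsto (fun n : ℕ => Q n * Real.exp (-(σ / Q n)) ^ (⌈a * n⌉₊ - K) *
      (C * ((K + 1) * (1 + 2 * n * b * (Q n)⁻¹) ^ K))) atTop (nhds 0) := by
  have hlog : Tendsto (fun n : ℕ => Real.log n) atTop atTop :=
    Real.tendsto_log_atTop.comp tendsto_natCast_atTop_atTop
  obtain ⟨t, ht1, ht⟩ : ∃ t : ℝ, 1 < t ∧ t * ℓ < a * σ := by
    obtain ⟨t, h1, h2⟩ := exists_between ((one_lt_div hℓ).2 ha)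
    exact ⟨t, h1, (lt_div_iff₀ hℓ).1 h2⟩
  have hlim : Tendsto (fun n : ℕ => Real.exp (σ * K) * C * (K + 1) *
      (Real.exp (-((t - 1) * Real.log n)) * (1 + (4 * b / ℓ) * Real.log n) ^ K)) atTop
      (nhds 0) := by
    have h := ((tendsto_exp_neg_mul_one_add_pow (sub_pos.2 ht1)
      (C := 4 * b / ℓ) (by positivity) K).comp hlog).const_mul (Real.exp (σ * K) * C * (K + 1))
    rw [mul_zero] at h
    exact h
  refine squeeze_zero' ?_ ?_ hlim
  · filter_upwards [hQ1] with n hn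
    positivity
  have hup : ∀ᶠ n : ℕ in atTop, t * (Q n * (Real.log n / n)) < a * σ :=
    (hQ.const_mul t).eventually_lt_const ht
  have hlow : ∀ᶠ n : ℕ in atTop, ℓ / 2 < Q n * (Real.log n / n) :=
    hQ.eventually_const_lt (by linarith)
  have hup' : ∀ᶠ n : ℕ in atTop, Q n * (Real.log n / n) < ℓ + 1 :=
    hQ.eventually_lt_const (by linarith)
  filter_upwards [hQ1, hup, hlow, hup', hlog.eventually_ge_atTop (ℓ + 1),
    eventually_ge_atTop 1] with n hn hup hlow hup' hlogn hn1
  have hn0 : (0 : ℝ) < n := by exact_mod_cast hn1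
  have hQ0 : 0 < Q n := by linarith
  have hL0 : 0 < Real.log n := by linarith
  have hQn : Q n ≤ n := by
    have h1 : Q n * Real.log n < (ℓ + 1) * n := by
      rwa [← mul_div_assoc, div_lt_iff₀ hn0] at hup'
    nlinarith
  have hratio : n / Q n ≤ 2 / ℓ * Real.log n := by
    rw [← mul_div_assoc, lt_div_iff₀ hn0] at hlow
    rw [div_le_iff₀ hQ0, div_mul_eq_mul_div, div_mul_eq_mul_div, le_div_iff₀ hℓ]
    linarith
  have hexp : Real.exp (-(σ / Q n)) ^ (⌈a * n⌉₊ - K) ≤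
      Real.exp (σ * K) * Real.exp (-(t * Real.log n)) := by
    rw [← Real.exp_nat_mul, ← Real.exp_add]
    refine Real.exp_le_exp.2 ?_
    have h1 : a * n - K ≤ ((⌈a * n⌉₊ - K : ℕ) : ℝ) := by
      have h2 : (⌈a * n⌉₊ : ℝ) ≤ ((⌈a * n⌉₊ - K : ℕ) : ℝ) + K := by
        exact_mod_cast le_tsub_add
      linarith [Nat.le_ceil (a * (n : ℝ))]
    have h3 : 0 ≤ σ / Q n := by positivity
    have h4 : σ / Q n ≤ σ := div_le_self hσ hn
    have h5 : t * Real.log n ≤ a * n * (σ / Q n) := by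
      rw [← mul_div_assoc, le_div_iff₀ hQ0]
      rw [← mul_div_assoc, ← mul_div_assoc, div_lt_iff₀ hn0] at hup
      linarith
    have h6 := mul_le_mul_of_nonneg_right h1 h3
    have h7 : (K : ℝ) * (σ / Q n) ≤ K * σ := mul_le_mul_of_nonneg_left h4 (by positivity)
    linarith
  have hpoly : 2 * n * b * (Q n)⁻¹ ≤ 4 * b / ℓ * Real.log n := by
    calc 2 * n * b * (Q n)⁻¹ = 2 * b * (n / Q n) := by ring
      _ ≤ 2 * b * (2 / ℓ * Real.log n) := by gcongr
      _ = _ := by ring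
  have hnexp : (n : ℝ) * Real.exp (-(t * Real.log n)) = Real.exp (-((t - 1) * Real.log n)) := by
    conv_lhs => rw [← Real.exp_log hn0, Real.log_exp, ← Real.exp_add]
    ring_nf
  calc _ ≤ n * (Real.exp (σ * K) * Real.exp (-(t * Real.log n))) *
        (C * ((K + 1) * (1 + 4 * b / ℓ * Real.log n) ^ K)) := by gcongr
    _ = Real.exp (σ * K) * C * (K + 1) * ((n * Real.exp (-(t * Real.log n))) *
        (1 + 4 * b / ℓ * Real.log n) ^ K) := by ring
    _ = _ := by rw [hnexp]

/-- The number of cells per side: large enough for cells of side `s`, and with all prime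
factors exceeding `W`. -/
def cellCount (W : ℕ) (s : ℝ) : ℕ := W.factorial * ⌈1 / (s * W.factorial)⌉₊ + 1

theorem lt_of_prime_dvd_cellCount {W p : ℕ} {s : ℝ} (hp : p.Prime) (h : p ∣ cellCount W s) :
    W < p := by
  by_contra hle
  have h1 : p ∣ W.factorial := hp.dvd_factorial.2 (not_lt.1 hle)
  have h2 : p ∣ 1 := (Nat.dvd_add_right (h1.mul_right _)).1 h
  exact hp.one_lt.ne' (Nat.dvd_one.1 h2)

theorem one_le_mul_cellCount (W : ℕ) {s : ℝ} (hs : 0 < s) : 1 ≤ s * cellCount W s := by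
  have hW : (0 : ℝ) < W.factorial := by exact_mod_cast W.factorial_pos
  have h := (div_le_iff₀ (by positivity)).1 (Nat.le_ceil (1 / (s * W.factorial)))
  rw [cellCount]
  push_cast
  nlinarith

theorem mul_cellCount_le (W : ℕ) {s : ℝ} (hs : 0 < s) :
    s * cellCount W s ≤ 1 + s * (W.factorial + 1) := by
  have hW : (0 : ℝ) < W.factorial := by exact_mod_cast W.factorial_pos
  have h := Nat.ceil_lt_add_one (a := 1 / (s * W.factorial)) (by positivity)
  have h2 := mul_lt_mul_of_pos_left h (mul_pos hs hW)
  rw [mul_add, mul_one_div_cancel (by positivity)] at h2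
  rw [cellCount]
  push_cast
  linarith

theorem tendsto_mul_cellCount (W : ℕ) {s : ℕ → ℝ} (hs : ∀ᶠ n in atTop, 0 < s n)
    (hs0 : Tendsto s atTop (nhds 0)) :
    Tendsto (fun n => s n * cellCount W (s n)) atTop (nhds 1) := by
  have h1 : Tendsto (fun n => 1 + s n * (W.factorial + 1)) atTop (nhds 1) := by
    have h := (hs0.mul_const ((W.factorial : ℝ) + 1)).const_add 1
    rwa [zero_mul, add_zero] at h
  refine tendsto_of_tendsto_of_tendsto_of_le_of_le' tendsto_const_nhds h1 ?_ ?_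
  · filter_upwards [hs] with n hn using one_le_mul_cellCount W hn
  · filter_upwards [hs] with n hn using mul_cellCount_le W hn

theorem tendsto_cellCount (W : ℕ) {s : ℕ → ℝ} (hs : ∀ᶠ n in atTop, 0 < s n)
    (hs0 : Tendsto s atTop (nhds 0)) :
    Tendsto (fun n => cellCount W (s n)) atTop atTop := by
  rw [← tendsto_natCast_atTop_iff (R := ℝ)]
  have h1 : Tendsto (fun n => (s n)⁻¹) atTop atTop :=
    tendsto_inv_nhdsGT_zero.comp (tendsto_nhdsWithin_iff.2 ⟨hs0, hs⟩)
  refine tendsto_atTop_mono' _ ?_ h1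
  filter_upwards [hs] with n hn
  rw [inv_le_iff_one_le_mul₀ hn, mul_comm]
  exact one_le_mul_cellCount W hn

/-- The threshold is at least one. -/
theorem one_le_sInf_threshold [NeZero d] (M : Model d P) {θ : ℝ} (hθ : 0 < θ) :
    1 ≤ sInf {x : ℝ | 0 < x ∧ 1 < x * M.g (M.α / (x * θ))} := by
  refine le_csInf ?_ ?_
  · obtain ⟨s, hs, hgs⟩ := exists_pos_of_integral_pos (M.α_def ▸ M.α_pos) M.g_mem
    have hα := M.α_pos
    have h1 : 0 < M.α / (s * θ) := by positivity
    refine ⟨max (M.α / (s * θ)) (2 / M.g s), lt_max_of_lt_left h1, ?_⟩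
    set x := max (M.α / (s * θ)) (2 / M.g s)
    have hx : 0 < x := lt_max_of_lt_left h1
    have h2 : M.g s ≤ M.g (M.α / (x * θ)) := by
      refine M.g_antitone (mem_Ici.2 (by positivity)) (mem_Ici.2 hs.le) ?_
      have h3 : M.α / (s * θ) ≤ x := le_max_left _ _
      rw [div_le_iff₀ (by positivity)] at h3 ⊢
      linarith
    have h4 : 2 ≤ x * M.g s := (div_le_iff₀ hgs).1 (le_max_right _ _)
    nlinarith
  · rintro x ⟨hx, hx1⟩
    have hα := M.α_pos
    have h := (M.g_mem (M.α / (x * θ)) (by positivity)).2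
    nlinarith

theorem rhat_pow (hd : d ≠ 0) (M : Model d P) {γ : ℝ} (hγ : 0 ≤ γ) {n : ℕ} (hn : 1 ≤ n) :
    rhat M γ n ^ d = γ * Real.log n / (M.α * n) := by
  have h1 : 0 ≤ Real.log n := Real.log_natCast_nonneg n
  have h2 := M.α_pos
  rw [rhat, one_div, Real.rpow_inv_natCast_pow (by positivity) hd]

theorem rhat_pos (M : Model d P) {γ : ℝ} (hγ : 0 < γ) {n : ℕ} (hn : 2 ≤ n) :
    0 < rhat M γ n := by
  have h1 : 0 < Real.log n := Real.log_pos (by exact_mod_cast hn)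
  have h2 := M.α_pos
  have h3 : (0 : ℝ) < n := by exact_mod_cast (by omega : 0 < n)
  exact Real.rpow_pos_of_pos (by positivity) _

theorem tendsto_log_div_natCast :
    Tendsto (fun n : ℕ => Real.log n / n) atTop (nhds 0) :=
  (Real.isLittleO_log_id_atTop.tendsto_div_nhds_zero).comp tendsto_natCast_atTop_atTop

theorem tendsto_rhat (hd : d ≠ 0) (M : Model d P) (γ : ℝ) :
    Tendsto (rhat M γ) atTop (nhds 0) := by
  have h1 : Tendsto (fun n : ℕ => γ * Real.log n / (M.α * n)) atTop (nhds 0) := by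
    have h := tendsto_log_div_natCast.const_mul (γ / M.α)
    rw [mul_zero] at h
    refine h.congr fun n => ?_
    rw [div_mul_div_comm]
  have hd' : (0 : ℝ) < 1 / d := by positivity
  have h2 := h1.rpow_const (p := (1 : ℝ) / d) (Or.inr hd'.le)
  rwa [Real.zero_rpow hd'.ne'] at h2

/-- If the number of vertices stays in `[a n, 2 n]`, the failure probability is at most the
supremum of the conditional failure probabilities. -/
theorem measureReal_le_of_forall_count [IsProbabilityMeasure P] (M : Model d P) {n : ℕ} {a δ : ℝ}
    (ha : 0 < a) (ha1 : a < 1) (hδ : 0 ≤ δ) {A : Set Ω}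
    (hA : ∀ m : ℕ, a * n ≤ m → m ≤ 2 * n →
      P.real {ω | M.N n ω = m ∧ ω ∈ A} ≤ P.real {ω | M.N n ω = m} * δ) :
    P.real A ≤ P.real {ω | 0 ≤ (M.N n ω - a * n) * Real.log a} +
      P.real {ω | 0 ≤ (M.N n ω - (2 : ℝ) * n) * Real.log 2} + δ := by
  classical
  set I := (Finset.range (2 * n + 1)).filter fun m : ℕ => a * n ≤ m
  have hcover : A ⊆ {ω | 0 ≤ (M.N n ω - a * n) * Real.log a} ∪
      {ω | 0 ≤ (M.N n ω - (2 : ℝ) * n) * Real.log 2} ∪ ⋃ m ∈ I, {ω | M.N n ω = m ∧ ω ∈ A} := by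
    intro ω hω
    by_cases h1 : a * n ≤ M.N n ω
    · by_cases h2 : M.N n ω ≤ 2 * n
      · refine Or.inr (Set.mem_iUnion₂.2 ⟨M.N n ω, ?_, rfl, hω⟩)
        exact Finset.mem_filter.2 ⟨Finset.mem_range.2 (by omega), h1⟩
      · refine Or.inl (Or.inr (mul_nonneg (sub_nonneg.2 ?_) (Real.log_nonneg (by norm_num))))
        exact_mod_cast (not_le.1 h2).le
    · exact Or.inl (Or.inl (mul_nonneg_of_nonpos_of_nonpos (by linarith)
        (Real.log_nonpos ha.le ha1.le)))
  have hsum : P.real (⋃ m ∈ I, {ω | M.N n ω = m ∧ ω ∈ A}) ≤ δ := by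
    have hdisj : (I : Set ℕ).PairwiseDisjoint fun m => {ω | M.N n ω = m} := by
      intro m _ m' _ hmm'
      refine Set.disjoint_left.2 fun ω h h' => hmm' ?_
      have hm : M.N n ω = m := h
      exact hm.symm.trans h'
    calc _ ≤ ∑ m ∈ I, P.real {ω | M.N n ω = m ∧ ω ∈ A} := measureReal_biUnion_finset_le _ _
      _ ≤ ∑ m ∈ I, P.real {ω | M.N n ω = m} * δ := by
          refine Finset.sum_le_sum fun m hm => ?_
          obtain ⟨h1, h2⟩ := Finset.mem_filter.1 hm
          exact hA m h2 (by have := Finset.mem_range.1 h1; omega)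
      _ = P.real (⋃ m ∈ I, {ω | M.N n ω = m}) * δ := by
          rw [← Finset.sum_mul, measureReal_biUnion_finset hdisj
            fun m _ => M.N_meas n (measurableSet_singleton m)]
      _ ≤ 1 * δ := mul_le_mul_of_nonneg_right measureReal_le_one hδ
      _ = δ := one_mul δ
  refine (measureReal_mono hcover (measure_ne_top _ _)).trans
    ((measureReal_union_le _ _).trans (add_le_add (measureReal_union_le _ _) hsum))

theorem tendsto_measureReal_not_connected (hd : 2 ≤ d) [IsProbabilityMeasure P] (M : Model d P)
    {γ : ℝ} (hγ : 1 < γ) :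
    Tendsto (fun n : ℕ => P.real {ω | ¬ connectedGraph M n (rhat M γ n) ω}) atTop (nhds 0) := by
  have hd0 : NeZero d := ⟨by omega⟩
  have hα := M.α_pos
  have hγ0 : 0 < γ := by linarith
  obtain ⟨η, hη, D, hD, hp, hη'⟩ := exists_discretisation M.g_antitone M.g_mem M.g_integrable
    M.α_def (div_lt_self hα hγ) hα
  set σ := ∑ z ∈ (Fintype.piFinset fun _ : Fin d => Finset.Icc (-(D : ℤ)) D).erase 0,
    cellKer M.g η D z with hσ
  have hσ0 : 0 < σ := by
    have h1 : 0 < η ^ d * σ := lt_trans (by positivity) hη'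
    exact pos_of_mul_pos_right h1 (by positivity)
  set ℓ := M.α / (γ * η ^ d)
  have hℓ0 : 0 < ℓ := by positivity
  have hℓ : ℓ < σ := by
    rw [div_lt_iff₀ (by positivity)] at hη' ⊢
    linarith
  obtain ⟨a, haℓ, ha1⟩ := exists_between ((div_lt_one hσ0).2 hℓ)
  have ha0 : 0 < a := lt_trans (by positivity) haℓ
  obtain ⟨J, hJ⟩ := exists_nat_ge (max 1 (σ / M.g (η * (√d + √d)) ^ 2))
  have hJ1 : 1 ≤ J := by exact_mod_cast (le_max_left _ _).trans hJ
  have hσJ : σ ≤ J * M.g (η * (√d + √d)) ^ 2 :=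
    (div_le_iff₀ (by positivity)).1 ((le_max_right _ _).trans hJ)
  set K := J * J + 2 * J
  set w := J * J * D + 6 * J + 6
  set b := (2 * (w + 1) + 1) ^ d
  set W := K + (2 * D + 1) ^ d
  set q : ℕ → ℕ := fun n => cellCount W (η * rhat M γ n)
  have hs : ∀ᶠ n in atTop, 0 < η * rhat M γ n := by
    filter_upwards [eventually_ge_atTop 2] with n hn using mul_pos hη (rhat_pos M hγ0 hn)
  have hs0 : Tendsto (fun n => η * rhat M γ n) atTop (nhds 0) := by
    have h := (tendsto_rhat (by omega) M γ).const_mul η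
    rwa [mul_zero] at h
  have hq : Tendsto q atTop atTop := tendsto_cellCount W hs hs0
  have hQ : Tendsto (fun n : ℕ => (q n : ℝ) ^ d * (Real.log n / n)) atTop (nhds ℓ) := by
    have h := ((tendsto_mul_cellCount W hs hs0).pow d).const_mul ℓ
    rw [one_pow, mul_one] at h
    refine h.congr' ?_
    filter_upwards [eventually_ge_atTop 1] with n hn
    have hn0 : (n : ℝ) ≠ 0 := by exact_mod_cast (by omega : n ≠ 0)
    rw [mul_pow, mul_pow, rhat_pow (by omega) M hγ0.le hn]
    simp only [ℓ, q]
    field_simp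
  have hQ1 : ∀ᶠ n in atTop, 1 ≤ (q n : ℝ) ^ d := by
    filter_upwards [hq.eventually_ge_atTop 1] with n hn
    exact one_le_pow₀ (by exact_mod_cast hn)
  have herr := tendsto_error_bound (a := a) (b := b) (C := 1 + 2 ^ b * 2 ^ (K * J)) K hℓ0 hσ0.le
    (by positivity) (by positivity) ((div_lt_iff₀ hσ0).1 haℓ) hQ1 hQ
  have htotal := ((tendsto_measureReal_poisson_tail M ha0 ha1.ne).add
    (tendsto_measureReal_poisson_tail M two_pos (by norm_num))).add herr
  rw [add_zero, add_zero] at htotal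
  refine squeeze_zero' (Eventually.of_forall fun _ => measureReal_nonneg) ?_ htotal
  filter_upwards [eventually_ge_atTop 2, hq.eventually_gt_atTop (2 * J),
    hq.eventually_gt_atTop 2, hq.eventually_gt_atTop (2 * D)] with n hn hqJ hq2 hqD
  have hr := rhat_pos M hγ0 hn
  refine measureReal_le_of_forall_count M ha0 ha1 (by positivity) fun m hm hm' => ?_
  refine (measureReal_not_connected_le hd M n m hJ1 hD hqJ hq2 hqD le_rfl le_rfl
    (Nat.le_add_right _ _) (Nat.le_add_left _ _)
    (fun p hp hpq => (lt_of_prime_dvd_cellCount hp hpq).le) hr hη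
    (one_le_mul_cellCount W (mul_pos hη hr)) hp hσ hσJ).trans ?_
  refine mul_le_mul_of_nonneg_left ?_ measureReal_nonneg
  have hm2 : (m : ℝ) ≤ 2 * n := by exact_mod_cast hm'
  have hexp1 : Real.exp (-(σ / (q n : ℝ) ^ d)) ≤ 1 := Real.exp_le_one_iff.2 (by
    have : 0 ≤ σ / (q n : ℝ) ^ d := by positivity
    linarith)
  have hpow : Real.exp (-(σ / (q n : ℝ) ^ d)) ^ (m - K) ≤
      Real.exp (-(σ / (q n : ℝ) ^ d)) ^ (⌈a * n⌉₊ - K) :=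
    pow_le_pow_of_le_one (Real.exp_pos _).le hexp1
      (Nat.sub_le_sub_right (Nat.ceil_le.2 hm) K)
  gcongr

/-- Theorem 2: for `γ > β`, `G_n(r̂_n(γ))` is connected with high probability. -/
theorem connected_whp (hd : 2 ≤ d) [IsProbabilityMeasure P] (M : Model d P)
    {c : ℝ} (hc : (d : ℝ) < c)
    (hg : M.g =o[atTop] fun r : ℝ => r ^ (-c))
    (θ : ℝ) (hθ : θ = (volume (Metric.ball (0 : EuclideanSpace ℝ (Fin d)) 1)).toReal)
    (β : ℝ) (hβ : β = sInf {x : ℝ | 0 < x ∧ 1 < x * M.g (M.α / (x * θ))})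
    {γ : ℝ} (hγ : β < γ) :
    Tendsto (fun n : ℕ => (P {ω | connectedGraph M n (rhat M γ n) ω}).toReal)
      atTop (nhds 1) := by
  have hd0 : NeZero d := ⟨by omega⟩
  have hθ0 : 0 < θ := by
    rw [hθ]
    exact ENNReal.toReal_pos (Metric.measure_ball_pos volume _ one_pos).ne' measure_ball_lt_top.ne
  have hγ1 : 1 < γ := (hβ ▸ one_le_sInf_threshold M hθ0).trans_lt hγ
  have h := (tendsto_measureReal_not_connected hd M hγ1).const_sub 1
  rw [sub_zero] at h
  refine tendsto_of_tendsto_of_tendsto_of_le_of_le h tendsto_const_nhds (fun n => ?_)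
    fun n => measureReal_le_one
  have h1 : P.real (univ : Set Ω) ≤ P.real {ω | connectedGraph M n (rhat M γ n) ω} +
      P.real {ω | ¬ connectedGraph M n (rhat M γ n) ω} :=
    (measureReal_mono (fun ω _ => em (connectedGraph M n (rhat M γ n) ω))
      (measure_ne_top _ _)).trans (measureReal_union_le _ _)
  rw [probReal_univ] at h1
  exact sub_le_iff_le_add.2 h1

end RCM
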